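/- arXiv:1606.09389 — 6 statements merged into one kernel-verified Lean document; each statement's English description precedes it below -/
import Mathlib

section
/- Every finite Eulerian bipartite graph G (i.e., a bipartite graph in which every vertex has even degree) with maximum degree Δ(G) ≤ 8 has a cyclic interval Δ(G)-coloring. -/
open SimpleGraph

/-- The set of colors appearing on edges incident to `v` under the edge coloring `c`. -/
def colorsAt {V : Type*} (G : SimpleGraph V) (c : Sym2 V → ℕ) (v : V) : Set ℕ :=
  c '' (G.incidenceSet v)

/-- A set of natural numbers is an interval of consecutive integers. -/
def IsIntervalSet (S : Set ℕ) : Prop := ∃ a b : ℕ, S = Set.Icc a b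

/-- A proper edge coloring of `G` with colors `1, …, t`: every edge gets a color in
`{1, …, t}` and distinct edges sharing a vertex get distinct colors. -/
def IsProperEdgeColoring {V : Type*} (G : SimpleGraph V) (t : ℕ) (c : Sym2 V → ℕ) : Prop :=
  (∀ e ∈ G.edgeSet, c e ∈ Set.Icc 1 t) ∧
  ∀ e₁ ∈ G.edgeSet, ∀ e₂ ∈ G.edgeSet, e₁ ≠ e₂ → (∃ v, v ∈ e₁ ∧ v ∈ e₂) → c e₁ ≠ c e₂

/-- A cyclic interval `t`-coloring of `G`: a proper edge coloring with colors `1, …, t`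
such that at every vertex the set of incident colors, or its complement in `{1, …, t}`,
is an interval of consecutive integers. -/
def IsCyclicIntervalColoring {V : Type*} (G : SimpleGraph V) (t : ℕ) (c : Sym2 V → ℕ) : Prop :=
  IsProperEdgeColoring G t c ∧
  ∀ v : V, IsIntervalSet (colorsAt G c v) ∨ IsIntervalSet (Set.Icc 1 t \ colorsAt G c v)


lemma konig_aux {E A B : Type*} [Fintype A] [Fintype B] [DecidableEq E] [DecidableEq A]
    [DecidableEq B] (l : E → A) (r : E → B) (k : ℕ) : ∀ (s : Finset E),
    (∀ a, (s.filter (fun e => l e = a)).card = k) →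
    (∀ b, (s.filter (fun e => r e = b)).card = k) →
    ∃ c : E → ℕ, (∀ e ∈ s, c e < k) ∧
      (∀ i < k, ∀ a, ∃! e, e ∈ s ∧ l e = a ∧ c e = i) ∧
      (∀ i < k, ∀ b, ∃! e, e ∈ s ∧ r e = b ∧ c e = i) := by
  induction k with
  | zero =>
    intro s hl hr
    refine ⟨fun _ => 0, ?_, by simp, by simp⟩
    intro e he
    have := hl (l e)
    rw [Finset.card_eq_zero] at this
    have h2 : e ∈ s.filter (fun e' => l e' = l e) := by simp [he]
    rw [this] at h2
    simp at h2
  | succ k ih =>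
    intro s hl hr
    have hall : ∃ f : A → B, Function.Injective f ∧
        ∀ a, f a ∈ (s.filter (fun e => l e = a)).image r := by
      rw [← Finset.all_card_le_biUnion_card_iff_exists_injective]
      intro S
      set N := S.biUnion (fun a => (s.filter (fun e => l e = a)).image r) with hN
      have h1 : (s.filter (fun e => l e ∈ S)).card = S.card * (k+1) := by
        rw [Finset.card_eq_sum_card_fiberwise (f := l) (t := S)]
        · rw [Finset.sum_const_nat]
          intro a ha
          rw [← hl a]
          congr 1
          ext e
          simp only [Finset.mem_filter]
          constructor
          · rintro ⟨⟨h, _⟩, h'⟩; exact ⟨h, h'⟩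
          · rintro ⟨h, h'⟩; exact ⟨⟨h, h' ▸ ha⟩, h'⟩
        · intro e he
          simpa using (Finset.mem_filter.1 he).2
      have h2 : (s.filter (fun e => r e ∈ N)).card = N.card * (k+1) := by
        rw [Finset.card_eq_sum_card_fiberwise (f := r) (t := N)]
        · rw [Finset.sum_const_nat]
          intro a ha
          rw [← hr a]
          congr 1
          ext e
          simp only [Finset.mem_filter]
          constructor
          · rintro ⟨⟨h, _⟩, h'⟩; exact ⟨h, h'⟩
          · rintro ⟨h, h'⟩; exact ⟨⟨h, h' ▸ ha⟩, h'⟩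
        · intro e he
          simpa using (Finset.mem_filter.1 he).2
      have h3 : (s.filter (fun e => l e ∈ S)) ⊆ (s.filter (fun e => r e ∈ N)) := by
        intro e he
        simp only [Finset.mem_filter] at he ⊢
        refine ⟨he.1, ?_⟩
        rw [hN, Finset.mem_biUnion]
        exact ⟨l e, he.2, Finset.mem_image.2 ⟨e, by simp [he.1], rfl⟩⟩
      have h4 := Finset.card_le_card h3
      rw [h1, h2] at h4
      exact Nat.le_of_mul_le_mul_right h4 (Nat.succ_pos k)
    obtain ⟨f, hf, hfm⟩ := hall
    have hg : ∀ a, ∃ e, e ∈ s ∧ l e = a ∧ r e = f a := by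
      intro a
      have := hfm a
      simp only [Finset.mem_image, Finset.mem_filter] at this
      obtain ⟨e, ⟨h1, h2⟩, h3⟩ := this
      exact ⟨e, h1, h2, h3⟩
    choose g hgs hgl hgr using hg
    have hcard : Fintype.card A = Fintype.card B := by
      have h1 : s.card = Fintype.card A * (k+1) := by
        rw [Finset.card_eq_sum_card_fiberwise (f := l) (t := Finset.univ) (by intro e _; simp),
          Finset.sum_const_nat (fun a _ => hl a)]; rfl
      have h2 : s.card = Fintype.card B * (k+1) := by
        rw [Finset.card_eq_sum_card_fiberwise (f := r) (t := Finset.univ) (by intro e _; simp),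
          Finset.sum_const_nat (fun a _ => hr a)]; rfl
      exact Nat.eq_of_mul_eq_mul_right (Nat.succ_pos k) (h1.symm.trans h2)
    have hfs : Function.Surjective f :=
      ((Fintype.bijective_iff_injective_and_card f).2 ⟨hf, hcard⟩).2
    set s' := s.filter (fun e => g (l e) ≠ e) with hs'
    have hl' : ∀ a, (s'.filter (fun e => l e = a)).card = k := by
      intro a
      have : s'.filter (fun e => l e = a) = (s.filter (fun e => l e = a)).erase (g a) := by
        ext e
        simp only [hs', Finset.mem_filter, Finset.mem_erase]
        grind
      rw [this, Finset.card_erase_of_mem (by simp [hgs, hgl]), hl]; rfl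
    have hr' : ∀ b, (s'.filter (fun e => r e = b)).card = k := by
      intro b
      obtain ⟨a, rfl⟩ := hfs b
      have : s'.filter (fun e => r e = f a) = (s.filter (fun e => r e = f a)).erase (g a) := by
        ext e
        simp only [hs', Finset.mem_filter, Finset.mem_erase]
        constructor
        · rintro ⟨⟨h1, h2⟩, h3⟩
          exact ⟨fun h => h2 (by rw [h, hgl]), h1, h3⟩
        · rintro ⟨h1, h2, h3⟩
          refine ⟨⟨h2, fun h => h1 ?_⟩, h3⟩
          have : f (l e) = f a := by rw [← hgr, h, h3]
          rw [← hf this, h]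
      rw [this, Finset.card_erase_of_mem (by simp [hgs, hgr]), hr]; rfl
    obtain ⟨c, hc, hcl, hcr⟩ := ih s' hl' hr'
    have hms : ∀ e, e ∈ s' ↔ e ∈ s ∧ g (l e) ≠ e := by intro e; simp [hs']
    refine ⟨fun e => if g (l e) = e then k else c e, ?_, ?_, ?_⟩
    · intro e he
      by_cases h : g (l e) = e
      · simp [h]
      · have := hc e ((hms e).2 ⟨he, h⟩)
        simp only [h, if_false]; omega
    · intro i hi a
      by_cases hik : i = k
      · refine ⟨g a, ⟨hgs a, hgl a, by simp [hgl, hik]⟩, ?_⟩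
        rintro e ⟨h1, h2, h3⟩
        by_contra h
        have h' : g (l e) ≠ e := by rw [h2]; exact fun h'' => h h''.symm
        have := hc e ((hms e).2 ⟨h1, h'⟩)
        simp only [h', if_false] at h3; omega
      · obtain ⟨e, ⟨h1, h2, h3⟩, h4⟩ := hcl i (by omega) a
        rw [hms] at h1
        refine ⟨e, ⟨h1.1, h2, by simp [h1.2, h3]⟩, ?_⟩
        rintro e' ⟨h5, h6, h7⟩
        by_cases h : g (l e') = e'
        · simp only [h, if_true] at h7; omega
        · simp only [h, if_false] at h7
          exact h4 e' ⟨(hms e').2 ⟨h5, h⟩, h6, h7⟩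
    · intro i hi b
      by_cases hik : i = k
      · obtain ⟨a, rfl⟩ := hfs b
        refine ⟨g a, ⟨hgs a, hgr a, by simp [hgl, hik]⟩, ?_⟩
        rintro e ⟨h1, h2, h3⟩
        by_cases h' : g (l e) = e
        · have : f (l e) = f a := by rw [← hgr, h', h2]
          rw [← hf this, h']
        · have := hc e ((hms e).2 ⟨h1, h'⟩)
          simp only [h', if_false] at h3; omega
      · obtain ⟨e, ⟨h1, h2, h3⟩, h4⟩ := hcr i (by omega) b
        rw [hms] at h1
        refine ⟨e, ⟨h1.1, h2, by simp [h1.2, h3]⟩, ?_⟩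
        rintro e' ⟨h5, h6, h7⟩
        by_cases h : g (l e') = e'
        · simp only [h, if_true] at h7; omega
        · simp only [h, if_false] at h7
          exact h4 e' ⟨(hms e').2 ⟨h5, h⟩, h6, h7⟩

lemma refine_aux {E A : Type*} [Fintype E] [Fintype A] [DecidableEq A] (f : E → A)
    (h : ∀ a, Even (Finset.univ.filter (fun e => f e = a)).card) :
    ∃ (m : A → ℕ) (f' : E → Σ a, Fin (m a)), (∀ e, (f' e).1 = f e) ∧
      ∀ x, (Finset.univ.filter (fun e => f' e = x)).card = 2 := by
  classical
  choose m hm using h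
  have hcard : ∀ a, Fintype.card {e // f e = a} = m a * 2 := by
    intro a; rw [Fintype.card_subtype, hm]; omega
  let φ : ∀ a, {e // f e = a} ≃ Fin (m a) × Fin 2 := fun a =>
    (Fintype.equivFinOfCardEq (hcard a)).trans finProdFinEquiv.symm
  refine ⟨m, fun e => ⟨f e, (φ (f e) ⟨e, rfl⟩).1⟩, fun e => rfl, ?_⟩
  rintro ⟨a, j⟩
  have : (Finset.univ.filter (fun e => (⟨f e, (φ (f e) ⟨e, rfl⟩).1⟩ : Σ a, Fin (m a)) = ⟨a, j⟩))
      = Finset.univ.image (fun t : Fin 2 => ((φ a).symm (j, t)).1) := by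
    ext e
    simp only [Finset.mem_filter, Finset.mem_univ, true_and, Finset.mem_image]
    constructor
    · intro h
      have h1 : f e = a := congrArg Sigma.fst h
      subst h1
      simp only [Sigma.mk.injEq, heq_eq_eq, true_and] at h
      refine ⟨(φ (f e) ⟨e, rfl⟩).2, ?_⟩
      rw [← h]
      simp
    · rintro ⟨t, rfl⟩
      have key : ∀ x : {e // f e = a}, (⟨f x.1, (φ (f x.1) ⟨x.1, rfl⟩).1⟩ : Σ a, Fin (m a)) = ⟨a, (φ a x).1⟩ := by
        rintro ⟨x, hx⟩
        subst hx
        rfl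
      rw [key]
      simp
  rw [this, Finset.card_image_of_injective]
  · simp
  · intro t t' h
    have := (φ a).symm.injective (Subtype.ext h)
    simpa using this

lemma half_aux {E A A' : Type*} [Fintype E] [Fintype A'] [DecidableEq A] [DecidableEq A']
    (l : E → A) (l' : E → A') (p : A' → A) (hp : ∀ e, p (l' e) = l e) (c : E → ℕ) (i : ℕ)
    (h : ∀ a, ∃! e, e ∈ (Finset.univ : Finset E) ∧ l' e = a ∧ c e = i) (a : A) :
    (Finset.univ.filter (fun e => l e = a ∧ c e = i)).card
      = (Finset.univ.filter (fun x => p x = a)).card := by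
  apply Finset.card_bij (fun e _ => l' e)
  · intro e he
    simp only [Finset.mem_filter, Finset.mem_univ, true_and] at he ⊢
    rw [hp, he.1]
  · intro e he e' he' hh
    simp only [Finset.mem_filter, Finset.mem_univ, true_and] at he he'
    exact (h (l' e)).unique ⟨by simp, rfl, he.2⟩ ⟨by simp, hh.symm, he'.2⟩
  · intro x hx
    simp only [Finset.mem_filter, Finset.mem_univ, true_and] at hx
    obtain ⟨e, ⟨_, h1, h2⟩, _⟩ := h x
    refine ⟨e, ?_, h1⟩
    simp only [Finset.mem_filter, Finset.mem_univ, true_and]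
    exact ⟨by rw [← hp, h1, hx], h2⟩

lemma split_aux {E A B : Type*} [Fintype E] [Fintype A] [Fintype B] [DecidableEq A]
    [DecidableEq B] (l : E → A) (r : E → B)
    (hl : ∀ a, Even (Finset.univ.filter (fun e => l e = a)).card)
    (hr : ∀ a, Even (Finset.univ.filter (fun e => r e = a)).card) :
    ∃ c : E → ℕ, (∀ e, c e < 2) ∧
      (∀ a, ∀ i < 2, 2 * (Finset.univ.filter (fun e => l e = a ∧ c e = i)).card
        = (Finset.univ.filter (fun e => l e = a)).card) ∧
      (∀ a, ∀ i < 2, 2 * (Finset.univ.filter (fun e => r e = a ∧ c e = i)).card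
        = (Finset.univ.filter (fun e => r e = a)).card) := by
  classical
  obtain ⟨m, l', hl1, hl2⟩ := refine_aux l hl
  obtain ⟨n, r', hr1, hr2⟩ := refine_aux r hr
  obtain ⟨c, hc, hcl, hcr⟩ := konig_aux l' r' 2 Finset.univ hl2 hr2
  have tot : ∀ (P : E → Prop) [DecidablePred P], (Finset.univ.filter P).card =
      (Finset.univ.filter (fun e => P e ∧ c e = 0)).card
      + (Finset.univ.filter (fun e => P e ∧ c e = 1)).card := by
    intro P _
    rw [← Finset.card_union_of_disjoint]
    · congr 1
      ext e
      have := hc e (Finset.mem_univ e)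
      simp only [Finset.mem_filter, Finset.mem_univ, true_and, Finset.mem_union]
      constructor
      · intro h
        rcases (by omega : c e = 0 ∨ c e = 1) with h' | h'
        · exact Or.inl ⟨h, h'⟩
        · exact Or.inr ⟨h, h'⟩
      · tauto
    · rw [Finset.disjoint_filter]
      rintro e _ ⟨_, h⟩ ⟨_, h'⟩
      omega
  refine ⟨c, fun e => hc e (by simp), ?_, ?_⟩
  · intro a i hi
    have h := fun j hj => half_aux l l' Sigma.fst hl1 c j (hcl j hj) a
    have ht := tot (fun e => l e = a)
    have h0 := h 0 (by omega)
    have h1 := h 1 (by omega)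
    have h2 := h i hi
    convert_to 2 * (Finset.univ.filter (fun e => l e = a ∧ c e = i)).card = _
    omega
  · intro a i hi
    have h := fun j hj => half_aux r r' Sigma.fst hr1 c j (hcr j hj) a
    have ht := tot (fun e => r e = a)
    have h0 := h 0 (by omega)
    have h1 := h 1 (by omega)
    have h2 := h i hi
    convert_to 2 * (Finset.univ.filter (fun e => r e = a ∧ c e = i)).card = _
    omega

lemma loop_half {E V : Type*} [Fintype V] [DecidableEq E] [DecidableEq V] (hd : E → V)
    (k : ℕ) (s : Finset E) (m : V → ℕ) (hm : ∀ v, (s.filter (fun e => hd e = v)).card = m v)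
    (hk : ∀ v, m v ≤ k) (v : V) :
    ((s.disjSum (Finset.univ.sigma (fun v : V => Finset.range (k - m v)))).filter
      (fun e => Sum.elim hd (fun x : Σ _ : V, ℕ => x.1) e = v)).card = k := by
  have : ((s.disjSum (Finset.univ.sigma (fun v : V => Finset.range (k - m v)))).filter
      (fun e => Sum.elim hd (fun x : Σ _ : V, ℕ => x.1) e = v))
      = (s.filter (fun e => hd e = v)).disjSum
        ((Finset.range (k - m v)).map ⟨fun j => (⟨v, j⟩ : Σ _ : V, ℕ), by intro a b; simp⟩) := by
    ext x
    rcases x with e | ⟨w, j⟩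
    · simp
    · simp only [Finset.mem_filter, Finset.inr_mem_disjSum, Finset.mem_sigma, Finset.mem_univ,
        true_and, Sum.elim_inr, Finset.mem_map, Finset.mem_range]
      constructor
      · rintro ⟨h1, rfl⟩; exact ⟨j, h1, rfl⟩
      · rintro ⟨i, h1, h2⟩
        cases h2
        exact ⟨h1, rfl⟩
  rw [this, Finset.card_disjSum, hm, Finset.card_map, Finset.card_range]
  have := hk v
  omega

lemma loop_aux {E V : Type*} [Fintype V] [DecidableEq V] (tl hd : E → V)
    (k : ℕ) (s : Finset E) 
    (heq : ∀ v, (s.filter (fun e => tl e = v)).card = (s.filter (fun e => hd e = v)).card)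
    (hk : ∀ v, (s.filter (fun e => tl e = v)).card ≤ k) :
    ∃ c : E → ℕ, (∀ e ∈ s, c e < k) ∧
      (∀ e ∈ s, ∀ e' ∈ s, tl e = tl e' → c e = c e' → e = e') ∧
      (∀ e ∈ s, ∀ e' ∈ s, hd e = hd e' → c e = c e' → e = e') ∧
      (∀ e ∈ s, ∃ e' ∈ s, hd e' = tl e ∧ c e' = c e) ∧
      (∀ e ∈ s, ∃ e' ∈ s, tl e' = hd e ∧ c e' = c e) := by
  classical
  obtain ⟨c, hc, hcl, hcr⟩ := konig_aux _ _ k _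
    (loop_half tl k s (fun v => (s.filter (fun e => tl e = v)).card) (fun v => rfl) hk)
    (loop_half hd k s (fun v => (s.filter (fun e => tl e = v)).card) (fun v => (heq v).symm) hk)
  have hin : ∀ e ∈ s, (Sum.inl e : E ⊕ (Σ _ : V, ℕ)) ∈ s.disjSum (Finset.univ.sigma
      (fun v : V => Finset.range (k - (s.filter (fun e => tl e = v)).card))) := by
    intro e he; simpa using he
  refine ⟨fun e => c (Sum.inl e), fun e he => hc _ (hin e he), ?_, ?_, ?_, ?_⟩
  · intro e he e' he' h1 h2
    exact Sum.inl_injective ((hcl _ (hc _ (hin e he)) (tl e)).unique ⟨hin e he, rfl, rfl⟩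
      ⟨hin e' he', h1.symm, h2.symm⟩)
  · intro e he e' he' h1 h2
    exact Sum.inl_injective ((hcr _ (hc _ (hin e he)) (hd e)).unique ⟨hin e he, rfl, rfl⟩
      ⟨hin e' he', h1.symm, h2.symm⟩)
  · intro e he
    obtain ⟨x, ⟨h1, h2, h3⟩, _⟩ := hcr _ (hc _ (hin e he)) (tl e)
    rcases x with e' | x
    · exact ⟨e', by simpa using h1, h2, h3⟩
    · exact absurd ((hcl _ (hc _ (hin e he)) (tl e)).unique ⟨hin e he, rfl, rfl⟩
        ⟨h1, h2, h3⟩) (by simp)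
  · intro e he
    obtain ⟨x, ⟨h1, h2, h3⟩, _⟩ := hcl _ (hc _ (hin e he)) (hd e)
    rcases x with e' | x
    · exact ⟨e', by simpa using h1, h2, h3⟩
    · exact absurd ((hcr _ (hc _ (hin e he)) (hd e)).unique ⟨hin e he, rfl, rfl⟩
        ⟨h1, h2, h3⟩) (by simp)

lemma eight_half {E V : Type*} [Fintype E] [Fintype V] [DecidableEq V] (tl : E → V)
    (P : V → Prop) [DecidablePred P] (Q : E ⊕ {v // P v} → Prop) [DecidablePred Q] (v : V) :
    (Finset.univ.filter (fun x : E ⊕ {v // P v} =>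
      Sum.elim tl (fun y => y.1) x = v ∧ Q x)).card =
    (Finset.univ.filter (fun e => tl e = v ∧ Q (Sum.inl e))).card +
    (Finset.univ.filter (fun y : {v // P v} => y.1 = v ∧ Q (Sum.inr y))).card := by
  classical
  rw [← Finset.card_disjSum]
  congr 1
  ext x
  rcases x with e | y <;> simp

lemma loop_count {V : Type*} [Fintype V] [DecidableEq V] (P : V → Prop) [DecidablePred P] (v : V) :
    (Finset.univ.filter (fun y : {v // P v} => y.1 = v)).card = if P v then 1 else 0 := by
  split_ifs with h
  · rw [Finset.card_eq_one]
    refine ⟨⟨v, h⟩, ?_⟩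
    ext y
    simp [Subtype.ext_iff]
  · rw [Finset.card_eq_zero]
    ext y
    simp only [Finset.mem_filter, Finset.mem_univ, true_and, Finset.notMem_empty, iff_false]
    intro h'
    exact h (h' ▸ y.2)

lemma eight_aux {E V : Type*} [Fintype E] [Fintype V] [DecidableEq V] (tl hd : E → V)
    (m : V → ℕ) (ht : ∀ v, (Finset.univ.filter (fun e => tl e = v)).card = m v)
    (hh : ∀ v, (Finset.univ.filter (fun e => hd e = v)).card = m v)
    (hk : ∀ v, m v ≤ 4) :
    ∃ c : E → ℕ, (∀ e, c e < 4) ∧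
      (∀ e e', tl e = tl e' → c e = c e' → e = e') ∧
      (∀ e e', hd e = hd e' → c e = c e' → e = e') ∧
      (∀ e, ∃ e', hd e' = tl e ∧ c e' = c e) ∧
      (∀ e, ∃ e', tl e' = hd e ∧ c e' = c e) ∧
      (∀ e e', tl e = tl e' → m (tl e) = 2 → c e % 2 = c e' % 2 → e = e') := by
  classical
  let P : V → Prop := fun v => Odd (m v)
  let T : E ⊕ {v // P v} → V := Sum.elim tl (fun y => y.1)
  let H : E ⊕ {v // P v} → V := Sum.elim hd (fun y => y.1)
  have hT : ∀ v, (Finset.univ.filter (fun x => T x = v)).card = m v + if P v then 1 else 0 := by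
    intro v
    have := eight_half tl P (fun _ => True) v
    simp only [and_true, ht, loop_count] at this
    exact this
  have hH : ∀ v, (Finset.univ.filter (fun x => H x = v)).card = m v + if P v then 1 else 0 := by
    intro v
    have := eight_half hd P (fun _ => True) v
    simp only [and_true, hh, loop_count] at this
    exact this
  have hev : ∀ v, Even (m v + if P v then 1 else 0) := by
    intro v
    by_cases h : P v
    · simp only [h, if_true]; exact Odd.add_one h
    · simp only [h, if_false, add_zero]; exact Nat.not_odd_iff_even.1 h
  have hle : ∀ v, (m v + if P v then 1 else 0) ≤ 4 := by
    intro v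
    have h4 := hk v
    by_cases h : P v
    · simp only [h, if_true]
      obtain ⟨j, hj⟩ := (h : Odd (m v))
      omega
    · simp only [h, if_false]; omega
  obtain ⟨b, hb, hbT, hbH⟩ := split_aux T H (fun v => by rw [hT]; exact hev v)
    (fun v => by rw [hH]; exact hev v)
  have key : ∀ i < 2, ∀ v,
      2 * ((Finset.univ.filter (fun e => tl e = v ∧ b (Sum.inl e) = i)).card +
      (Finset.univ.filter (fun y : {v // P v} => y.1 = v ∧ b (Sum.inr y) = i)).card)
       = (m v + if P v then 1 else 0) := by
    intro i hi v
    rw [← hT, ← hbT v i hi]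
    congr 1
    exact (eight_half tl P (fun x => b x = i) v).symm
  have key' : ∀ i < 2, ∀ v,
      2 * ((Finset.univ.filter (fun e => hd e = v ∧ b (Sum.inl e) = i)).card +
      (Finset.univ.filter (fun y : {v // P v} => y.1 = v ∧ b (Sum.inr y) = i)).card)
       = (m v + if P v then 1 else 0) := by
    intro i hi v
    rw [← hH, ← hbH v i hi]
    congr 1
    exact (eight_half hd P (fun x => b x = i) v).symm
  have hc : ∀ i : ℕ, ∃ c : E → ℕ, i < 2 →
      (∀ e, b (Sum.inl e) = i → c e < 2) ∧
      (∀ e, b (Sum.inl e) = i → ∀ e', b (Sum.inl e') = i → tl e = tl e' → c e = c e' → e = e') ∧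
      (∀ e, b (Sum.inl e) = i → ∀ e', b (Sum.inl e') = i → hd e = hd e' → c e = c e' → e = e') ∧
      (∀ e, b (Sum.inl e) = i → ∃ e', b (Sum.inl e') = i ∧ hd e' = tl e ∧ c e' = c e) ∧
      (∀ e, b (Sum.inl e) = i → ∃ e', b (Sum.inl e') = i ∧ tl e' = hd e ∧ c e' = c e) := by
    intro i
    by_cases hi : i < 2
    · have e1 : ∀ f : E → V, ∀ v, ((Finset.univ.filter (fun e => b (Sum.inl e) = i)).filter
        (fun e => f e = v)) = Finset.univ.filter (fun e => f e = v ∧ b (Sum.inl e) = i) := by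
        intro f v; ext e; simp [and_comm]
      obtain ⟨c, hc⟩ := loop_aux tl hd 2 (Finset.univ.filter (fun e => b (Sum.inl e) = i))
        (by intro v; rw [e1, e1]; have := key i hi v; have := key' i hi v; omega)
        (by intro v; rw [e1]; have := key i hi v; have := hle v; omega)
      refine ⟨c, fun _ => ?_⟩
      simpa only [Finset.mem_filter, Finset.mem_univ, true_and] using hc
    · exact ⟨fun _ => 0, fun h => absurd h hi⟩
  choose c hc using hc
  have hb' : ∀ e, b (Sum.inl e) < 2 := fun e => hb _
  refine ⟨fun e => 2 * c (b (Sum.inl e)) e + b (Sum.inl e), ?_, ?_, ?_, ?_, ?_, ?_⟩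
  · intro e
    have h1 := hb' e
    have h2 := (hc _ h1).1 e rfl
    simp only
    omega
  · intro e e' h1 h2
    have h3 := hb' e
    have h4 := hb' e'
    simp only at h2
    have h5 : b (Sum.inl e') = b (Sum.inl e) := by omega
    rw [h5] at h2
    exact (hc _ h3).2.1 e rfl e' h5 h1 (by omega)
  · intro e e' h1 h2
    have h3 := hb' e
    have h4 := hb' e'
    simp only at h2
    have h5 : b (Sum.inl e') = b (Sum.inl e) := by omega
    rw [h5] at h2
    exact (hc _ h3).2.2.1 e rfl e' h5 h1 (by omega)
  · intro e
    obtain ⟨e', h1, h2, h3⟩ := (hc _ (hb' e)).2.2.2.1 e rfl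
    exact ⟨e', h2, by simp only [h1, h3]⟩
  · intro e
    obtain ⟨e', h1, h2, h3⟩ := (hc _ (hb' e)).2.2.2.2 e rfl
    exact ⟨e', h2, by simp only [h1, h3]⟩
  · intro e e' h1 h2 h3
    have h4 := hb' e
    have h5 := hb' e'
    simp only at h3
    have h6 : b (Sum.inl e') = b (Sum.inl e) := by omega
    have h7 := key _ h4 (tl e)
    have hP : ¬ P (tl e) := by
      change ¬ Odd (m (tl e)); rw [h2]; decide
    simp only [hP, if_false, h2] at h7
    have h8 : (Finset.univ.filter
      (fun e'' => tl e'' = tl e ∧ b (Sum.inl e'') = b (Sum.inl e))).card ≤ 1 := by omega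
    rw [Finset.card_le_one] at h8
    exact h8 e (by simp) e' (by simp [h1, h6])

lemma interval_check (k : ℕ) (hk : k ≤ 4) (C : Finset ℕ) (hC : ∀ i ∈ C, i < k)
    (h4 : k = 4 → C ≠ {0, 2} ∧ C ≠ {1, 3}) (S : Set ℕ)
    (hS : ∀ x, x ∈ S ↔ ∃ i ∈ C, x = 2 * i + 1 ∨ x = 2 * i + 2) :
    IsIntervalSet S ∨ IsIntervalSet (Set.Icc 1 (2 * k) \ S) := by
  have hS' : S = ↑(C.biUnion (fun i => ({2 * i + 1, 2 * i + 2} : Finset ℕ))) := by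
    ext x; rw [hS]; simp
  have main : ∀ k ≤ 4, ∀ C ∈ (Finset.range k).powerset, (k = 4 → C ≠ {0, 2} ∧ C ≠ {1, 3}) →
    ∃ a ≤ 8, ∃ b ≤ 8, (C.biUnion (fun i => ({2 * i + 1, 2 * i + 2} : Finset ℕ))) = Finset.Icc a b ∨
     Finset.Icc 1 (2 * k) \ (C.biUnion (fun i => ({2 * i + 1, 2 * i + 2} : Finset ℕ)))
       = Finset.Icc a b := by
    decide +kernel
  obtain ⟨a, _, b, _, h⟩ := main k hk C (by
    rw [Finset.mem_powerset]; intro i hi; simpa using hC i hi) h4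
  rcases h with h | h
  · left
    exact ⟨a, b, by rw [hS', h, Finset.coe_Icc]⟩
  · right
    refine ⟨a, b, ?_⟩
    rw [hS', ← Finset.coe_Icc, ← Finset.coe_Icc, ← h, Finset.coe_sdiff]

/-- Combination of `loop_aux` and `eight_aux`. -/
lemma pair_coloring {E V : Type*} [Fintype E] [Fintype V] [DecidableEq V] (tl hd : E → V)
    (m : V → ℕ) (ht : ∀ v, (Finset.univ.filter (fun e => tl e = v)).card = m v)
    (hh : ∀ v, (Finset.univ.filter (fun e => hd e = v)).card = m v) (k : ℕ)
    (hk : ∀ v, m v ≤ k) :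
    ∃ c : E → ℕ, (∀ e, c e < k) ∧
      (∀ e e', tl e = tl e' → c e = c e' → e = e') ∧
      (∀ e e', hd e = hd e' → c e = c e' → e = e') ∧
      (∀ e, ∃ e', hd e' = tl e ∧ c e' = c e) ∧
      (∀ e, ∃ e', tl e' = hd e ∧ c e' = c e) ∧
      (k = 4 → ∀ e e', tl e = tl e' → m (tl e) = 2 → c e % 2 = c e' % 2 → e = e') := by
  by_cases h4 : k = 4
  · subst h4
    obtain ⟨c, h1, h2, h3, h5, h6, h7⟩ := eight_aux tl hd m ht hh hk
    exact ⟨c, h1, h2, h3, h5, h6, fun _ => h7⟩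
  · obtain ⟨c, h1, h2, h3, h5, h6⟩ := loop_aux tl hd k Finset.univ
      (fun v => by rw [ht, hh]) (fun v => by rw [ht]; exact hk v)
    simp only [Finset.mem_univ, true_and, true_implies] at h1 h2 h3 h5 h6
    exact ⟨c, h1, h2, h3, h5, h6, fun h => absurd h h4⟩

lemma good_set {E V : Type*} [Fintype E] [DecidableEq V] (tl : E → V) (c : E → ℕ)
    (m : V → ℕ) (ht : ∀ v, (Finset.univ.filter (fun e => tl e = v)).card = m v)
    (hinj : ∀ e e', tl e = tl e' → c e = c e' → e = e')
    (hpar : ∀ e e', tl e = tl e' → m (tl e) = 2 → c e % 2 = c e' % 2 → e = e') (v : V)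
    (x y : ℕ) (hxy : x ≠ y) (hp : x % 2 = y % 2) :
    (Finset.univ.filter (fun e => tl e = v)).image c ≠ {x, y} := by
  intro h
  have hcard : ((Finset.univ.filter (fun e => tl e = v)).image c).card = m v := by
    rw [Finset.card_image_of_injOn, ht]
    intro e he e' he' hee
    simp only [Finset.coe_filter, Finset.mem_univ, true_and, Set.mem_ofPred_eq] at he he'
    exact hinj e e' (he.trans he'.symm) hee
  rw [h, Finset.card_pair hxy] at hcard
  have hx : x ∈ (Finset.univ.filter (fun e => tl e = v)).image c := by rw [h]; simp
  have hy : y ∈ (Finset.univ.filter (fun e => tl e = v)).image c := by rw [h]; simp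
  simp only [Finset.mem_image, Finset.mem_filter, Finset.mem_univ, true_and] at hx hy
  obtain ⟨e, he, rfl⟩ := hx
  obtain ⟨e', he', rfl⟩ := hy
  exact hxy (congrArg c (hpar e e' (he.trans he'.symm) (by rw [he]; exact hcard.symm) hp))

/-- every finite Eulerian bipartite graph with maximum degree at most `8`
has a cyclic interval `Δ(G)`-coloring. -/
theorem stmt_6 {V : Type*} [Fintype V] (G : SimpleGraph V) [DecidableRel G.Adj]
    (hbip : G.Colorable 2) (heul : ∀ v : V, Even (G.degree v)) (hΔ : G.maxDegree ≤ 8) :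
    ∃ c : Sym2 V → ℕ, IsCyclicIntervalColoring G G.maxDegree c := by
  classical
  obtain ⟨col⟩ := hbip
  have hadj : ∀ u v, G.Adj u v → col u ≠ col v := fun u v h => col.valid h
  obtain ⟨k, hk⟩ : ∃ k, G.maxDegree = 2 * k := by
    rcases isEmpty_or_nonempty V with h | h
    · exact ⟨0, by simp⟩
    · obtain ⟨v, hv⟩ := G.exists_maximal_degree_vertex
      obtain ⟨j, hj⟩ := heul v
      exact ⟨j, by omega⟩
  let E := {p : V × V // G.Adj p.1 p.2 ∧ col p.1 = 0}
  let l : E → V := fun p => p.1.1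
  let r : E → V := fun p => p.1.2
  have hl0 : ∀ p : E, col (l p) = 0 := fun p => p.2.2
  have hr0 : ∀ p : E, col (r p) ≠ 0 := fun p h => hadj _ _ p.2.1 (p.2.2.trans h.symm)
  have hlc : ∀ v, col v = 0 → (Finset.univ.filter (fun e => l e = v)).card = G.degree v := by
    intro v hv
    rw [← G.card_neighborFinset_eq_degree]
    apply Finset.card_bij (fun e _ => r e)
    · intro e he
      simp only [Finset.mem_filter, Finset.mem_univ, true_and] at he
      rw [SimpleGraph.mem_neighborFinset, ← he]
      exact e.2.1
    · intro e he e' he' h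
      simp only [Finset.mem_filter, Finset.mem_univ, true_and] at he he'
      exact Subtype.ext (Prod.ext (he.trans he'.symm) h)
    · intro w hw
      rw [SimpleGraph.mem_neighborFinset] at hw
      exact ⟨⟨(v, w), hw, hv⟩, by simp [l], rfl⟩
  have hrc : ∀ v, col v ≠ 0 → (Finset.univ.filter (fun e => r e = v)).card = G.degree v := by
    intro v hv
    rw [← G.card_neighborFinset_eq_degree]
    apply Finset.card_bij (fun e _ => l e)
    · intro e he
      simp only [Finset.mem_filter, Finset.mem_univ, true_and] at he
      rw [SimpleGraph.mem_neighborFinset, ← he]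
      exact e.2.1.symm
    · intro e he e' he' h
      simp only [Finset.mem_filter, Finset.mem_univ, true_and] at he he'
      exact Subtype.ext (Prod.ext h (he.trans he'.symm))
    · intro w hw
      rw [SimpleGraph.mem_neighborFinset] at hw
      have hw0 : col w = 0 := by
        have := hadj _ _ hw
        revert this hv
        generalize col v = a
        generalize col w = b
        revert a b
        decide
      exact ⟨⟨(w, v), hw.symm, hw0⟩, by simp [r], rfl⟩
  have hlc' : ∀ v, col v ≠ 0 → (Finset.univ.filter (fun e => l e = v)).card = 0 := by
    intro v hv
    rw [Finset.card_eq_zero, Finset.filter_eq_empty_iff]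
    intro e _ h
    exact hv (h ▸ hl0 e)
  have hrc' : ∀ v, col v = 0 → (Finset.univ.filter (fun e => r e = v)).card = 0 := by
    intro v hv
    rw [Finset.card_eq_zero, Finset.filter_eq_empty_iff]
    intro e _ h
    exact hr0 e (h ▸ hv)
  obtain ⟨b, hb, hbl, hbr⟩ := split_aux l r
    (fun v => by
      by_cases h : col v = 0
      · rw [hlc v h]; exact heul v
      · rw [hlc' v h]; exact Even.zero)
    (fun v => by
      by_cases h : col v = 0
      · rw [hrc' v h]; exact Even.zero
      · rw [hrc v h]; exact heul v)
  let tl : E → V := fun e => if b e = 1 then l e else r e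
  let hd : E → V := fun e => if b e = 1 then r e else l e
  have htl0 : ∀ e v, col v = 0 → (tl e = v ↔ l e = v ∧ b e = 1) := by
    intro e v hv
    by_cases h : b e = 1
    · simp [tl, h]
    · simp only [tl, h, if_false, and_false, iff_false]
      intro h'; exact hr0 e (h' ▸ hv)
  have hhd0 : ∀ e v, col v = 0 → (hd e = v ↔ l e = v ∧ b e = 0) := by
    intro e v hv
    by_cases h : b e = 1
    · simp only [hd, h, if_true, one_ne_zero, and_false, iff_false]
      intro h'; exact hr0 e (h' ▸ hv)
    · have : b e = 0 := by have := hb e; omega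
      simp [hd, this]
  have htl1 : ∀ e v, col v ≠ 0 → (tl e = v ↔ r e = v ∧ b e = 0) := by
    intro e v hv
    by_cases h : b e = 1
    · simp only [tl, h, if_true, one_ne_zero, and_false, iff_false]
      intro h'; exact hv (h' ▸ hl0 e)
    · have : b e = 0 := by have := hb e; omega
      simp [tl, this]
  have hhd1 : ∀ e v, col v ≠ 0 → (hd e = v ↔ r e = v ∧ b e = 1) := by
    intro e v hv
    by_cases h : b e = 1
    · simp [hd, h]
    · simp only [hd, h, if_false, and_false, iff_false]
      intro h'; exact hv (h' ▸ hl0 e)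
  have ht : ∀ v, (Finset.univ.filter (fun e => tl e = v)).card = G.degree v / 2 := by
    intro v
    by_cases h : col v = 0
    · simp only [htl0 _ v h]
      have := hbl v 1 (by omega)
      rw [hlc v h] at this
      omega
    · simp only [htl1 _ v h]
      have := hbr v 0 (by omega)
      rw [hrc v h] at this
      omega
  have hh : ∀ v, (Finset.univ.filter (fun e => hd e = v)).card = G.degree v / 2 := by
    intro v
    by_cases h : col v = 0
    · simp only [hhd0 _ v h]
      have := hbl v 0 (by omega)
      rw [hlc v h] at this
      omega
    · simp only [hhd1 _ v h]
      have := hbr v 1 (by omega)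
      rw [hrc v h] at this
      omega
  obtain ⟨c, hck, hct, hch, hcth, hcht, hc4⟩ := pair_coloring tl hd (fun v => G.degree v / 2)
    ht hh k (fun v => by have := G.degree_le_maxDegree v; omega)
  let q : E → Sym2 V := fun e => s(l e, r e)
  have hq : Function.Injective q := by
    intro e e' h
    simp only [q, Sym2.eq_iff] at h
    rcases h with ⟨h1, h2⟩ | ⟨h1, h2⟩
    · exact Subtype.ext (Prod.ext h1 h2)
    · exact absurd (h1 ▸ hl0 e) (hr0 e')
  have hqs : ∀ x ∈ G.edgeSet, ∃ e, q e = x := by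
    intro x
    induction x using Sym2.ind with
    | _ u v =>
      intro h
      rw [SimpleGraph.mem_edgeSet] at h
      by_cases hu : col u = 0
      · exact ⟨⟨(u, v), h, hu⟩, rfl⟩
      · have hv : col v = 0 := by
          have := hadj _ _ h
          revert this hu
          generalize col v = a
          generalize col u = b
          revert a b
          decide
        exact ⟨⟨(v, u), h.symm, hv⟩, Sym2.eq_swap⟩
  have hqe : ∀ e, q e ∈ G.edgeSet := fun e => e.2.1
  have hqm : ∀ e v, v ∈ q e ↔ l e = v ∨ r e = v := by
    intro e v
    simp only [q, Sym2.mem_iff, eq_comm]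
  have hth : ∀ e v, v ∈ q e ↔ tl e = v ∨ hd e = v := by
    intro e v
    rw [hqm]
    by_cases h : b e = 1 <;> simp [tl, hd, h, or_comm]
  have hside : ∀ e e' v, v ∈ q e → v ∈ q e' → b e = b e' →
      (tl e = v ∧ tl e' = v) ∨ (hd e = v ∧ hd e' = v) := by
    intro e e' v h1 h2 h3
    rw [hth] at h1 h2
    by_cases h : col v = 0
    · simp only [htl0 _ v h, hhd0 _ v h] at h1 h2 ⊢
      have := hb e
      grind
    · simp only [htl1 _ v h, hhd1 _ v h] at h1 h2 ⊢
      have := hb e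
      grind
  let f : E → ℕ := fun e => 2 * c e + b e + 1
  let F : Sym2 V → ℕ := Function.extend q f (fun _ => 0)
  have hF : ∀ e, F (q e) = f e := fun e => hq.extend_apply f _ e
  refine ⟨F, ⟨?_, ?_⟩, ?_⟩
  · intro x hx
    obtain ⟨e, rfl⟩ := hqs x hx
    rw [hF, hk, Set.mem_Icc]
    have := hck e
    have := hb e
    simp only [f]
    omega
  · intro x hx y hy hne ⟨v, hv1, hv2⟩ heq
    obtain ⟨e, rfl⟩ := hqs x hx
    obtain ⟨e', rfl⟩ := hqs y hy
    rw [hF, hF] at heq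
    simp only [f] at heq
    have h1 := hb e
    have h2 := hb e'
    apply hne
    congr 1
    rcases hside e e' v hv1 hv2 (by omega) with ⟨h3, h4⟩ | ⟨h3, h4⟩
    · exact hct e e' (h3.trans h4.symm) (by omega)
    · exact hch e e' (h3.trans h4.symm) (by omega)
  · intro v
    rw [hk]
    refine interval_check k (by omega) ((Finset.univ.filter (fun e => tl e = v)).image c) ?_ ?_ _ ?_
    · intro i hi
      rw [Finset.mem_image] at hi
      obtain ⟨e, _, rfl⟩ := hi
      exact hck e
    · intro h4
      exact ⟨good_set tl c _ ht hct (hc4 h4) v 0 2 (by decide) (by decide),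
        good_set tl c _ ht hct (hc4 h4) v 1 3 (by decide) (by decide)⟩
    · intro x
      have hmem : x ∈ colorsAt G F v ↔ ∃ e, v ∈ q e ∧ f e = x := by
        constructor
        · rintro ⟨y, ⟨hy1, hy2⟩, rfl⟩
          obtain ⟨e, rfl⟩ := hqs y hy1
          exact ⟨e, hy2, (hF e).symm⟩
        · rintro ⟨e, h1, rfl⟩
          exact ⟨q e, ⟨hqe e, h1⟩, hF e⟩
      rw [hmem]
      simp only [Finset.mem_image, Finset.mem_filter, Finset.mem_univ, true_and, f]
      constructor
      · rintro ⟨e, h1, rfl⟩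
        have hbe := hb e
        refine ⟨c e, ?_, by omega⟩
        rw [hth] at h1
        rcases h1 with h1 | h1
        · exact ⟨e, h1, rfl⟩
        · obtain ⟨e', h2, h3⟩ := hcht e
          exact ⟨e', h2.trans h1, h3⟩
      · rintro ⟨i, ⟨e, h1, rfl⟩, h2⟩
        obtain ⟨e', h3, h4⟩ := hcth e
        rw [h1] at h3
        have hm1 : v ∈ q e := (hth e v).2 (Or.inl h1)
        have hm2 : v ∈ q e' := (hth e' v).2 (Or.inr h3)
        have hbb : b e + b e' = 1 := by
          by_cases h : col v = 0
          · rw [htl0 _ v h] at h1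
            rw [hhd0 _ v h] at h3
            omega
          · rw [htl1 _ v h] at h1
            rw [hhd1 _ v h] at h3
            omega
        by_cases h5 : x = 2 * c e + b e + 1
        · exact ⟨e, hm1, h5.symm⟩
        · exact ⟨e', hm2, by omega⟩
end

section
/- Every finite bipartite graph G in which the degree of every vertex lies in the set {1, 2, 4, 6, 7, 8} has a cyclic interval t-coloring for some positive integer t. -/
open SimpleGraph

open Finset in
/-- A finite type of even size, fibred evenly over `X`, has a fixed point free involution
preserving the fibres. -/
lemma exists_pairing {E X : Type*} [Fintype E] [DecidableEq X] (f : E → X)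
    (hf : ∀ x, Even (#{e : E | f e = x})) :
    ∃ σ : Equiv.Perm E, (∀ e, σ (σ e) = e) ∧ (∀ e, σ e ≠ e) ∧ ∀ e, f (σ e) = f e := by
  classical
  have key : ∀ x, ∃ s : {e // f e = x} → {e // f e = x}, (∀ e, s (s e) = e) ∧ ∀ e, s e ≠ e := by
    intro x
    obtain ⟨k, hk⟩ := hf x
    have hc : Fintype.card {e // f e = x} = Fintype.card (Fin k ⊕ Fin k) := by
      rw [Fintype.card_subtype, hk]; simp
    let φ := Fintype.equivOfCardEq hc
    refine ⟨fun e => φ.symm (φ e).swap, fun e => by simp, fun e h => ?_⟩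
    have h2 : (φ e).swap = φ e := by
      have := congrArg φ h
      simpa using this
    rcases h3 : φ e with a | a <;> rw [h3] at h2 <;> simp at h2
  choose s hs1 hs2 using key
  have hs : ∀ e x (h : f e = x), (s (f e) ⟨e, rfl⟩).1 = (s x ⟨e, h⟩).1 := by
    intro e x h; subst h; rfl
  have inv : Function.Involutive (fun e => (s (f e) ⟨e, rfl⟩).1) := by
    intro e
    show (s (f (s (f e) ⟨e, rfl⟩).1) ⟨(s (f e) ⟨e, rfl⟩).1, rfl⟩).1 = e
    rw [hs _ (f e) (s (f e) ⟨e, rfl⟩).2]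
    have := hs1 (f e) ⟨e, rfl⟩
    exact congrArg Subtype.val this
  refine ⟨inv.toPerm, inv, fun e h => hs2 (f e) ⟨e, rfl⟩ (Subtype.ext h), fun e => (s (f e) ⟨e, rfl⟩).2⟩

/-- Two fixed point free involutions have a common alternating 2-colouring. -/
lemma exists_alternating {E : Type*} (σ τ : Equiv.Perm E)
    (hσ : ∀ e, σ (σ e) = e) (hσ' : ∀ e, σ e ≠ e)
    (hτ : ∀ e, τ (τ e) = e) (hτ' : ∀ e, τ e ≠ e) :
    ∃ c : E → Bool, (∀ e, c (σ e) = !c e) ∧ ∀ e, c (τ e) = !c e := by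
  classical
  set π : Equiv.Perm E := τ * σ with hπ
  have hss : σ * σ = 1 := by ext e; simp [hσ]
  have htt : τ * τ = 1 := by ext e; simp [hτ]
  have hsi : σ⁻¹ = σ := inv_eq_of_mul_eq_one_left hss
  have hti : τ⁻¹ = τ := inv_eq_of_mul_eq_one_left htt
  have hconj : σ * π * σ⁻¹ = π⁻¹ := by
    rw [hπ, mul_inv_rev, hsi, hti, mul_assoc, mul_assoc, hss, mul_one]
  have hk : ∀ (k : ℤ) (e : E), σ ((π ^ k) e) = (π ^ (-k)) (σ e) := by
    intro k e
    have h1 : σ * π ^ k * σ⁻¹ = (π⁻¹) ^ k := by rw [← hconj, conj_zpow]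
    have h2 : σ * π ^ k = π ^ (-k) * σ := by
      rw [zpow_neg, ← inv_zpow, ← h1]; simp
    have := congrArg (fun p : Equiv.Perm E => p e) h2
    simpa using this
  have hne : ∀ e, ¬ π.SameCycle e (σ e) := by
    rintro e ⟨k, hke⟩
    rcases Int.even_or_odd' k with ⟨m, hm | hm⟩
    · apply hσ' ((π ^ m) e)
      rw [hk, ← hke, hm, ← Equiv.Perm.mul_apply, ← zpow_add]
      congr 2; ring
    · apply hτ' (σ ((π ^ m) e))
      have : τ (σ ((π ^ m) e)) = (π ^ (1 + m)) e := by
        rw [zpow_add, zpow_one]; rfl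
      rw [this, hk, ← hke, hm, ← Equiv.Perm.mul_apply, ← zpow_add]
      congr 2; ring
  let S := Equiv.Perm.SameCycle.setoid π
  let q : E → Quotient S := fun e => Quotient.mk S e
  let _ : LinearOrder (Quotient S) := linearOrderOfSTO WellOrderingRel
  have hq : ∀ e, q (σ e) ≠ q e := by
    intro e h
    exact hne e (Quotient.exact h).symm
  have hq1 : ∀ e, q (τ e) = q (σ e) := by
    intro e
    apply Quotient.sound
    refine ⟨-1, ?_⟩
    rw [zpow_neg, zpow_one, Equiv.Perm.inv_eq_iff_eq, hπ]
    simp [hσ]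
  have hq2 : ∀ e, q (σ (τ e)) = q e := by
    intro e
    apply Quotient.sound
    refine ⟨1, ?_⟩
    rw [zpow_one, hπ]
    simp [hσ, hτ]
  refine ⟨fun e => decide (q e < q (σ e)), fun e => ?_, fun e => ?_⟩
  · simp only [hσ]
    rcases lt_or_gt_of_ne (hq e) with h | h
    · simp [h, not_lt_of_gt h]
    · simp [h, not_lt_of_gt h]
  · simp only [hq1, hq2]
    rcases lt_or_gt_of_ne (hq e) with h | h
    · simp [h, not_lt_of_gt h]
    · simp [h, not_lt_of_gt h]

open Finset in
lemma exists_split {E X Y : Type*} [Fintype E] [DecidableEq X] [DecidableEq Y]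
    (f : E → X) (g : E → Y)
    (hf : ∀ x, Even (#{e : E | f e = x})) (hg : ∀ y, Even (#{e : E | g e = y})) :
    ∃ c : E → Bool, (∀ x, #{e : E | f e = x ∧ c e = true} = #{e : E | f e = x ∧ c e = false}) ∧
      ∀ y, #{e : E | g e = y ∧ c e = true} = #{e : E | g e = y ∧ c e = false} := by
  obtain ⟨σ, s1, s2, s3⟩ := exists_pairing f hf
  obtain ⟨τ, t1, t2, t3⟩ := exists_pairing g hg
  obtain ⟨c, c1, c2⟩ := exists_alternating σ τ s1 s2 t1 t2
  refine ⟨c, fun x => ?_, fun y => ?_⟩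
  · apply Finset.card_bij' (fun e _ => σ e) (fun e _ => σ e) <;> simp +contextual [s1, s3, c1]
  · apply Finset.card_bij' (fun e _ => τ e) (fun e _ => τ e) <;> simp +contextual [t1, t3, c2]

open Finset in
lemma card_split_bool {E : Type*} [Fintype E] (P : E → Prop) [DecidablePred P] (c : E → Bool) :
    #{e : E | P e} = #{e : E | P e ∧ c e = true} + #{e : E | P e ∧ c e = false} := by
  rw [← Finset.card_filter_add_card_filter_not (s := {e : E | P e}) (fun e => c e = true),
    Finset.filter_filter, Finset.filter_filter]
  simp

open Finset in
lemma card_filter_sum {A B : Type*} [Fintype A] [Fintype B] (P : A ⊕ B → Prop) [DecidablePred P] :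
    #{e : A ⊕ B | P e} = #{a : A | P (.inl a)} + #{b : B | P (.inr b)} := by
  simp only [Finset.card_filter, Fintype.sum_sum_type]

open Finset in
lemma card_sub_eq {V : Type*} [Fintype V] [DecidableEq V] (P : V → Prop) [DecidablePred P] (v : V) :
    #{l : {v // P v} | l.1 = v} = if P v then 1 else 0 := by
  split_ifs with h
  · rw [Finset.card_eq_one]
    refine ⟨⟨v, h⟩, ?_⟩
    ext l; simp [Subtype.ext_iff]
  · rw [Finset.card_eq_zero, Finset.filter_eq_empty_iff]
    rintro ⟨l, hl⟩ _ rfl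
    exact h hl

open Finset in
lemma exists_split_digraph_aux {E V L : Type*} [Fintype E] [Fintype L] [DecidableEq V]
    (f g : E → V) (ι : L → V) (h : ∀ v, #{e : E | f e = v} = #{e : E | g e = v})
    (hL : ∀ v, #{l : L | ι l = v} ≤ 1)
    (ev : ∀ v, Even (#{e : E | f e = v} + #{l : L | ι l = v})) :
    ∃ c : E → Bool, ∀ v, (∀ b, #{e : E | f e = v ∧ c e = b} = #{e : E | g e = v ∧ c e = b}) ∧
      #{e : E | f e = v ∧ c e = true} ≤ #{e : E | f e = v ∧ c e = false} + 1 ∧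
      #{e : E | f e = v ∧ c e = false} ≤ #{e : E | f e = v ∧ c e = true} + 1 := by
  obtain ⟨c, hc1, hc2⟩ := exists_split (E := E ⊕ L) (Sum.elim f ι) (Sum.elim g ι)
    (by intro v; rw [card_filter_sum]; exact ev v)
    (by intro v; rw [card_filter_sum]; have := ev v; rw [h v] at this; exact this)
  refine ⟨fun e => c (.inl e), fun v => ?_⟩
  have a1 := hc1 v
  have a2 := hc2 v
  rw [card_filter_sum, card_filter_sum] at a1 a2
  have a1' : #{e : E | f e = v ∧ c (.inl e) = true} + #{l : L | ι l = v ∧ c (.inr l) = true} =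
    #{e : E | f e = v ∧ c (.inl e) = false} + #{l : L | ι l = v ∧ c (.inr l) = false} := a1
  have a2' : #{e : E | g e = v ∧ c (.inl e) = true} + #{l : L | ι l = v ∧ c (.inr l) = true} =
    #{e : E | g e = v ∧ c (.inl e) = false} + #{l : L | ι l = v ∧ c (.inr l) = false} := a2
  have b1 := card_split_bool (fun e => f e = v) (fun e => c (.inl e))
  have b2 := card_split_bool (fun e => g e = v) (fun e => c (.inl e))
  have b3 := card_split_bool (fun l : L => ι l = v) (fun e => c (.inr e))
  have b4 := h v
  have b5 := hL v
  clear a1 a2 hc1 hc2 ev hL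
  beta_reduce at *
  refine ⟨?_, by omega, by omega⟩
  rintro (_ | _) <;> omega

open Finset in
/-- Splitting of balanced digraphs into two balanced digraphs of nearly equal degrees. -/
lemma exists_split_digraph {E V : Type*} [Fintype E] [Fintype V] [DecidableEq V]
    (f g : E → V) (h : ∀ v, #{e : E | f e = v} = #{e : E | g e = v}) :
    ∃ c : E → Bool, ∀ v, (∀ b, #{e : E | f e = v ∧ c e = b} = #{e : E | g e = v ∧ c e = b}) ∧
      #{e : E | f e = v ∧ c e = true} ≤ #{e : E | f e = v ∧ c e = false} + 1 ∧
      #{e : E | f e = v ∧ c e = false} ≤ #{e : E | f e = v ∧ c e = true} + 1 := by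
  have hL := fun v => card_sub_eq (fun v => Odd (#{e : E | f e = v})) v
  apply exists_split_digraph_aux f g
    (fun l : {v : V // Odd (#{e : E | f e = v})} => l.1) h
  · intro v
    rw [hL]; split_ifs <;> simp
  · intro v
    rw [hL]
    split_ifs with h1
    · exact h1.add_one
    · simpa using h1

/-- The color number. -/
def colNum (k i j : Bool) : ℕ := 4 * j.toNat + 2 * i.toNat + k.toNat + 1

lemma colNum_inj {k i j k' i' j' : Bool} (h : colNum k i j = colNum k' i' j') :
    k = k' ∧ i = i' ∧ j = j' := by
  revert k i j k' i' j'; decide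

lemma colNum_mem (k i j : Bool) : colNum k i j ∈ Set.Icc 1 8 := by
  revert k i j; decide

lemma colNum_surj {q : ℕ} (h : q ∈ Set.Icc 1 8) : ∃ k i j, colNum k i j = q := by
  obtain ⟨h1, h2⟩ := h
  interval_cases q <;> decide

lemma colNum_cyclic : ∀ a b c d : Bool,
    (a.toNat + b.toNat ≤ c.toNat + d.toNat + 1) → (c.toNat + d.toNat ≤ a.toNat + b.toNat + 1) →
    ∃ l ∈ Finset.range 10, ∃ r ∈ Finset.range 10,
      (∀ k i j, (cond i (cond j a b) (cond j c d) = true ↔ (l ≤ colNum k i j ∧ colNum k i j ≤ r))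
        ∧ 1 ≤ l ∧ r ≤ 8) ∨
      (∀ k i j, (¬ cond i (cond j a b) (cond j c d) = true ↔
        (l ≤ colNum k i j ∧ colNum k i j ≤ r)) ∧ 1 ≤ l ∧ r ≤ 8) := by
  decide

open Finset in
lemma fiber_good {E : Type*} [Fintype E] (P : E → Prop) [DecidablePred P]
    (c0 c1 c2 : E → Bool) (n : Bool → Bool → ℕ)
    (hn : ∀ k i j, #{e : E | P e ∧ c0 e = k ∧ c1 e = i ∧ c2 e = j} = n i j)
    (hd : #{e : E | P e} ≤ 8)
    (h1 : n true true + n true false ≤ n false true + n false false + 1)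
    (h2 : n false true + n false false ≤ n true true + n true false + 1)
    (h3 : ∀ i, n i true ≤ n i false + 1) (h4 : ∀ i, n i false ≤ n i true + 1) :
    (∀ e e', P e → P e' → colNum (c0 e) (c1 e) (c2 e) = colNum (c0 e') (c1 e') (c2 e') → e = e') ∧
    (IsIntervalSet ((fun e => colNum (c0 e) (c1 e) (c2 e)) '' {e | P e}) ∨
     IsIntervalSet (Set.Icc 1 8 \ (fun e => colNum (c0 e) (c1 e) (c2 e)) '' {e | P e})) := by
  have tot : #{e : E | P e} =
      2 * (n true true + n true false + n false true + n false false) := by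
    have s1 : ∀ k i, #{e : E | P e ∧ c0 e = k ∧ c1 e = i} = n i true + n i false := by
      intro k i
      rw [card_split_bool _ c2]
      simp only [and_assoc, hn]
    have s2 : ∀ k, #{e : E | P e ∧ c0 e = k} =
        n true true + n true false + (n false true + n false false) := by
      intro k
      rw [card_split_bool _ c1]
      simp only [and_assoc, s1]
    rw [card_split_bool P c0, s2, s2]
    ring
  have le1 : ∀ i j, n i j ≤ 1 := by
    have := h3 true; have := h3 false; have := h4 true; have := h4 false
    rintro (_ | _) (_ | _) <;> omega
  have hmem : ∀ k i j, n i j = 1 ↔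
      colNum k i j ∈ (fun e => colNum (c0 e) (c1 e) (c2 e)) '' {e | P e} := by
    intro k i j
    constructor
    · intro h
      have : 0 < #{e : E | P e ∧ c0 e = k ∧ c1 e = i ∧ c2 e = j} := by rw [hn, h]; simp
      obtain ⟨e, he⟩ := Finset.card_pos.1 this
      simp only [Finset.mem_filter, Finset.mem_univ, true_and] at he
      obtain ⟨p, rfl, rfl, rfl⟩ := he
      exact ⟨e, p, rfl⟩
    · rintro ⟨e, p, he⟩
      obtain ⟨q1, q2, q3⟩ := colNum_inj he
      have : 0 < #{e : E | P e ∧ c0 e = k ∧ c1 e = i ∧ c2 e = j} :=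
        Finset.card_pos.2 ⟨e, by simp only [Finset.mem_filter, Finset.mem_univ, true_and]; exact ⟨p, q1, q2, q3⟩⟩
      rw [hn] at this
      have := le1 i j
      omega
  constructor
  · intro e e' p p' h
    obtain ⟨q1, q2, q3⟩ := colNum_inj h
    have := hn (c0 e) (c1 e) (c2 e)
    have := this.trans_le (le1 _ _)
    rw [Finset.card_le_one] at this
    exact this e (by simp [p]) e' (by simp [p', q1, q2, q3])
  · have tn : ∀ i j, (decide (n i j = 1)).toNat = n i j := by
      intro i j
      have := le1 i j
      rcases (by omega : n i j = 0 ∨ n i j = 1) with h | h <;> simp [h]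
    obtain ⟨l, -, r, -, h | h⟩ := colNum_cyclic (decide (n true true = 1)) (decide (n true false = 1))
      (decide (n false true = 1)) (decide (n false false = 1))
      (by simpa only [tn] using h1) (by simpa only [tn] using h2)
    · left
      refine ⟨l, r, ?_⟩
      have hl := (h true true true).2
      ext q
      constructor
      · rintro ⟨e, p, rfl⟩
        refine (h _ _ _).1.1 ?_
        have := (hmem (c0 e) (c1 e) (c2 e)).2 ⟨e, p, rfl⟩
        revert this
        cases c1 e <;> cases c2 e <;> simp
      · intro hq
        obtain ⟨k, i, j, rfl⟩ := colNum_surj (q := q) ⟨hl.1.trans hq.1, hq.2.trans hl.2⟩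
        rw [← hmem]
        have := (h k i j).1.2 hq
        revert this
        cases i <;> cases j <;> simp
    · right
      refine ⟨l, r, ?_⟩
      have hl := (h true true true).2
      ext q
      constructor
      · rintro ⟨hq, hq2⟩
        obtain ⟨k, i, j, rfl⟩ := colNum_surj hq
        rw [← hmem] at hq2
        refine (h _ _ _).1.1 ?_
        revert hq2
        cases i <;> cases j <;> simp
      · intro hq
        have hq8 : q ∈ Set.Icc 1 8 := ⟨hl.1.trans hq.1, hq.2.trans hl.2⟩
        refine ⟨hq8, ?_⟩
        obtain ⟨k, i, j, rfl⟩ := colNum_surj hq8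
        rw [← hmem]
        have := (h k i j).1.2 hq
        revert this
        cases i <;> cases j <;> simp

open Finset in
lemma core {E X Y : Type*} [Fintype E] [Fintype X] [Fintype Y] [DecidableEq X] [DecidableEq Y]
    (f : E → X) (g : E → Y)
    (hf : ∀ x, Even (#{e : E | f e = x})) (hg : ∀ y, Even (#{e : E | g e = y}))
    (hf8 : ∀ x, #{e : E | f e = x} ≤ 8) (hg8 : ∀ y, #{e : E | g e = y} ≤ 8) :
    ∃ col : E → ℕ, (∀ e, col e ∈ Set.Icc 1 8) ∧
      (∀ x, (∀ e e', f e = x → f e' = x → col e = col e' → e = e') ∧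
        (IsIntervalSet (col '' {e | f e = x}) ∨
          IsIntervalSet (Set.Icc 1 8 \ col '' {e | f e = x}))) ∧
      (∀ y, (∀ e e', g e = y → g e' = y → col e = col e' → e = e') ∧
        (IsIntervalSet (col '' {e | g e = y}) ∨
          IsIntervalSet (Set.Icc 1 8 \ col '' {e | g e = y}))) := by
  classical
  obtain ⟨c0, hc0f, hc0g⟩ := exists_split f g hf hg
  let tail : E → X ⊕ Y := fun e => if c0 e = true then .inl (f e) else .inr (g e)
  let head : E → X ⊕ Y := fun e => if c0 e = false then .inl (f e) else .inr (g e)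
  have tl : ∀ e x, tail e = .inl x ↔ f e = x ∧ c0 e = true := by
    intro e x; simp only [tail]; split_ifs with h <;> simp [h]
  have tr : ∀ e x, tail e = .inr x ↔ g e = x ∧ c0 e = false := by
    intro e x; simp only [tail]; split_ifs with h <;> simp [h]
  have hl : ∀ e x, head e = .inl x ↔ f e = x ∧ c0 e = false := by
    intro e x; simp only [head]; split_ifs with h <;> simp [h]
  have hr : ∀ e x, head e = .inr x ↔ g e = x ∧ c0 e = true := by
    intro e x; simp only [head]; split_ifs with h <;> simp [h]
  obtain ⟨c1, hc1⟩ := exists_split_digraph tail head (by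
    rintro (x | y)
    · simp only [tl, hl]; exact hc0f x
    · simp only [tr, hr]; exact (hc0g y).symm)
  obtain ⟨c2, hc2⟩ := exists_split_digraph (fun e => (tail e, c1 e)) (fun e => (head e, c1 e)) (by
    rintro ⟨v, b⟩
    simp only [Prod.mk.injEq]
    exact (hc1 v).1 b)
  simp only [Prod.forall, Prod.mk.injEq, and_assoc] at hc2
  have sp : ∀ v i, #{e : E | tail e = v ∧ c1 e = i} =
      #{e : E | tail e = v ∧ c1 e = i ∧ c2 e = true} +
      #{e : E | tail e = v ∧ c1 e = i ∧ c2 e = false} := by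
    intro v i
    rw [card_split_bool _ c2]
    simp only [and_assoc]
  refine ⟨fun e => colNum (c0 e) (c1 e) (c2 e), fun e => colNum_mem _ _ _, fun x => ?_, fun y => ?_⟩
  · apply fiber_good (fun e => f e = x) c0 c1 c2
      (fun i j => #{e : E | tail e = .inl x ∧ c1 e = i ∧ c2 e = j})
    · intro k i j
      cases k
      · rw [(hc2 (.inl x) i).1 j]
        simp only [hl, and_assoc]
      · simp only [tl, and_assoc]
    · exact hf8 x
    · rw [← sp, ← sp]; exact (hc1 (.inl x)).2.1
    · rw [← sp, ← sp]; exact (hc1 (.inl x)).2.2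
    · intro i; exact (hc2 (.inl x) i).2.1
    · intro i; exact (hc2 (.inl x) i).2.2
  · apply fiber_good (fun e => g e = y) c0 c1 c2
      (fun i j => #{e : E | tail e = .inr y ∧ c1 e = i ∧ c2 e = j})
    · intro k i j
      cases k
      · simp only [tr, and_assoc]
      · rw [(hc2 (.inr y) i).1 j]
        simp only [hr, and_assoc]
    · exact hg8 y
    · rw [← sp, ← sp]; exact (hc1 (.inr y)).2.1
    · rw [← sp, ← sp]; exact (hc1 (.inr y)).2.2
    · intro i; exact (hc2 (.inr y) i).2.1
    · intro i; exact (hc2 (.inr y) i).2.2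

open Finset in
/-- Removing the auxiliary loops at odd vertices keeps the cyclic interval property. -/
lemma vertex_good {D V : Type*} [Fintype D] [Fintype V] [DecidableEq V] (Q : V → Prop)
    [DecidablePred Q] (F : D → V) (col : D ⊕ {v // Q v} → ℕ) (v : V)
    (hQ : Q v ↔ Odd (#{d : D | F d = v}))
    (hd : #{d : D | F d = v} ∈ ({1, 2, 4, 6, 7, 8} : Set ℕ))
    (hcol : ∀ e, col e ∈ Set.Icc 1 8)
    (hinj : ∀ e e', Sum.elim F Subtype.val e = v → Sum.elim F Subtype.val e' = v →
      col e = col e' → e = e')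
    (hint : IsIntervalSet (col '' {e | Sum.elim F Subtype.val e = v}) ∨
          IsIntervalSet (Set.Icc 1 8 \ col '' {e | Sum.elim F Subtype.val e = v})) :
    IsIntervalSet ((fun d => col (.inl d)) '' {d | F d = v}) ∨
          IsIntervalSet (Set.Icc 1 8 \ (fun d => col (.inl d)) '' {d | F d = v}) := by
  classical
  by_cases hq : Q v
  · have ho := hQ.1 hq
    have h17 : #{d : D | F d = v} = 1 ∨ #{d : D | F d = v} = 7 := by
      simp only [Set.mem_insert_iff, Set.mem_singleton_iff] at hd
      rcases hd with h | h | h | h | h | h <;> rw [h] at ho ⊢ <;> first | (revert ho; decide) | simp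
    rcases h17 with h | h
    · left
      obtain ⟨d, hd⟩ := Finset.card_eq_one.1 h
      have : {d | F d = v} = {d} := by
        ext x
        have := congrArg (x ∈ ·) hd
        simpa using this
      refine ⟨col (.inl d), col (.inl d), ?_⟩
      rw [this]; simp
    · right
      set T : Finset ℕ := ({d : D | F d = v} : Finset D).image (fun d => col (.inl d)) with hT
      have hTc : #T = 7 := by
        rw [hT, Finset.card_image_of_injOn, h]
        intro a ha b hb hab
        simp only [Finset.coe_filter, Finset.mem_univ, true_and, Set.mem_ofPred_eq] at ha hb
        exact Sum.inl_injective (hinj (.inl a) (.inl b) ha hb hab)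
      have hTs : T ⊆ Finset.Icc 1 8 := by
        intro q hq
        obtain ⟨d, -, rfl⟩ := Finset.mem_image.1 hq
        exact Finset.mem_Icc.2 (hcol _)
      have hc := Finset.card_sdiff_of_subset hTs
      rw [hTc] at hc
      obtain ⟨q, hq⟩ := Finset.card_eq_one.1 (hc.trans (by simp))
      refine ⟨q, q, ?_⟩
      have := congrArg (fun s : Finset ℕ => (s : Set ℕ)) hq
      simpa [hT] using this
  · have : col '' {e | Sum.elim F Subtype.val e = v} = (fun d => col (.inl d)) '' {d | F d = v} := by
      ext q
      constructor
      · rintro ⟨e | ⟨l, hl⟩, he, rfl⟩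
        · exact ⟨e, he, rfl⟩
        · simp only [Set.mem_ofPred_eq, Sum.elim_inr] at he
          exact absurd (he ▸ hl) hq
      · rintro ⟨d, hd, rfl⟩
        exact ⟨.inl d, hd, rfl⟩
    rwa [this] at hint

/-- every finite bipartite graph in which all vertex degrees lie in
`{1, 2, 4, 6, 7, 8}` has a cyclic interval `t`-coloring for some positive `t`. -/
theorem stmt_7 {V : Type*} [Fintype V] (G : SimpleGraph V) [DecidableRel G.Adj]
    (hbip : G.Colorable 2)
    (hdeg : ∀ v : V, G.degree v ∈ ({1, 2, 4, 6, 7, 8} : Set ℕ)) :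
    ∃ t : ℕ, 0 < t ∧ ∃ c : Sym2 V → ℕ, IsCyclicIntervalColoring G t c := by
  classical
  obtain ⟨χ⟩ := hbip
  refine ⟨8, by norm_num, ?_⟩
  have d1 : ∀ v, (Finset.univ.filter (fun d : G.Dart => d.fst = v)).card = G.degree v :=
    fun v => G.dart_fst_fiber_card_eq_degree v
  have d2 : ∀ v, (Finset.univ.filter (fun d : G.Dart => d.snd = v)).card = G.degree v := by
    intro v
    rw [← d1 v]
    apply Finset.card_bij' (fun d _ => d.symm) (fun d _ => d.symm) <;> simp
  let Q : V → Prop := fun v => Odd (G.degree v)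
  have ev : ∀ v, Even (G.degree v + if Q v then 1 else 0) := by
    intro v
    split_ifs with h
    · exact h.add_one
    · simpa [Q] using h
  have le8 : ∀ v, G.degree v + (if Q v then 1 else 0) ≤ 8 := by
    intro v
    have h := hdeg v
    simp only [Set.mem_insert_iff, Set.mem_singleton_iff] at h
    split_ifs with hq
    · obtain ⟨m, hm⟩ : Odd (G.degree v) := hq
      omega
    · omega
  have e1 : ∀ v, (Finset.univ.filter (fun e : G.Dart ⊕ {v // Q v} =>
      Sum.elim (fun d => d.fst) Subtype.val e = v)).card = G.degree v + if Q v then 1 else 0 := by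
    intro v
    rw [card_filter_sum, ← card_sub_eq Q v, ← d1 v]; rfl
  have e2 : ∀ v, (Finset.univ.filter (fun e : G.Dart ⊕ {v // Q v} =>
      Sum.elim (fun d => d.snd) Subtype.val e = v)).card = G.degree v + if Q v then 1 else 0 := by
    intro v
    rw [card_filter_sum, ← card_sub_eq Q v, ← d2 v]; rfl
  obtain ⟨col, hcol, hf, hg⟩ := core (E := G.Dart ⊕ {v // Q v})
    (Sum.elim (fun d => d.fst) Subtype.val) (Sum.elim (fun d => d.snd) Subtype.val)
    (fun v => by rw [e1]; exact ev v) (fun v => by rw [e2]; exact ev v)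
    (fun v => by rw [e1]; exact le8 v) (fun v => by rw [e2]; exact le8 v)
  have uniq : ∀ d d' : G.Dart, χ d.fst = 0 → χ d'.fst = 0 → d.edge = d'.edge → d = d' := by
    intro d d' h h' he
    rcases SimpleGraph.dart_edge_eq_iff d d' |>.1 he with h1 | h1
    · exact h1
    · exfalso
      have h2 := χ.valid d'.adj
      subst h1
      exact h2 (h'.trans h.symm)
  have ex : ∀ e ∈ G.edgeSet, ∃ d : G.Dart, d.edge = e ∧ χ d.fst = 0 := by
    intro e
    induction e using Sym2.ind with
    | _ a b =>
      intro hab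
      have hab : G.Adj a b := hab
      have h2 := χ.valid hab
      by_cases ha : χ a = 0
      · exact ⟨⟨(a, b), hab⟩, rfl, ha⟩
      · refine ⟨⟨(b, a), hab.symm⟩, Sym2.eq_swap, ?_⟩
        show χ b = 0
        omega
  let c : Sym2 V → ℕ := fun e =>
    if h : ∃ d : G.Dart, d.edge = e ∧ χ d.fst = 0 then col (.inl h.choose) else 0
  have hc : ∀ d : G.Dart, χ d.fst = 0 → c d.edge = col (.inl d) := by
    intro d hd
    have h : ∃ d' : G.Dart, d'.edge = d.edge ∧ χ d'.fst = 0 := ⟨d, rfl, hd⟩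
    have := uniq _ d h.choose_spec.2 hd h.choose_spec.1
    simp only [c, dif_pos h, this]
  have memd : ∀ (d : G.Dart) v, v ∈ d.edge ↔ v = d.fst ∨ v = d.snd := by
    intro d v
    exact Sym2.mem_iff
  have side : ∀ (d : G.Dart) v, χ d.fst = 0 → v ∈ d.edge →
      if χ v = 0 then d.fst = v else d.snd = v := by
    intro d v hd hv
    have h2 := χ.valid d.adj
    rcases (memd d v).1 hv with rfl | rfl
    · rw [if_pos hd]
    · rw [if_neg]
      intro h; exact h2 (hd.trans h.symm)
  refine ⟨c, ⟨?_, ?_⟩, ?_⟩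
  · intro e he
    obtain ⟨d, rfl, hd⟩ := ex e he
    rw [hc d hd]; exact hcol _
  · rintro e₁ h₁ e₂ h₂ hne ⟨v, hv₁, hv₂⟩ heq
    obtain ⟨a, rfl, ha⟩ := ex _ h₁
    obtain ⟨b, rfl, hb⟩ := ex _ h₂
    rw [hc a ha, hc b hb] at heq
    have s1 := side a v ha hv₁
    have s2 := side b v hb hv₂
    apply hne
    congr 1
    apply Sum.inl_injective (β := {v // Q v})
    by_cases h : χ v = 0
    · rw [if_pos h] at s1 s2
      exact (hf v).1 _ _ s1 s2 heq
    · rw [if_neg h] at s1 s2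
      exact (hg v).1 _ _ s1 s2 heq
  · intro v
    by_cases h : χ v = 0
    · have hset : colorsAt G c v = (fun d => col (.inl d)) '' {d : G.Dart | d.fst = v} := by
        ext q
        constructor
        · rintro ⟨e, ⟨he, hv⟩, rfl⟩
          obtain ⟨d, rfl, hd⟩ := ex e he
          have s := side d v hd hv
          rw [if_pos h] at s
          exact ⟨d, s, (hc d hd).symm⟩
        · rintro ⟨d, rfl, rfl⟩
          exact ⟨d.edge, ⟨d.edge_mem, (memd d _).2 (Or.inl rfl)⟩, hc d h⟩
      rw [hset]
      exact vertex_good Q (fun d : G.Dart => d.fst) col v (by rw [d1]) (by rw [d1]; exact hdeg v)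
        hcol (hf v).1 (hf v).2
    · have hset : colorsAt G c v = (fun d => col (.inl d)) '' {d : G.Dart | d.snd = v} := by
        ext q
        constructor
        · rintro ⟨e, ⟨he, hv⟩, rfl⟩
          obtain ⟨d, rfl, hd⟩ := ex e he
          have s := side d v hd hv
          rw [if_neg h] at s
          exact ⟨d, s, (hc d hd).symm⟩
        · rintro ⟨d, rfl, rfl⟩
          have h2 := χ.valid d.adj
          exact ⟨d.edge, ⟨d.edge_mem, (memd d _).2 (Or.inr rfl)⟩, hc d (by omega)⟩
      rw [hset]
      exact vertex_good Q (fun d : G.Dart => d.snd) col v (by rw [d2]) (by rw [d2]; exact hdeg v)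
        hcol (hg v).1 (hg v).2
end

section
/- Every finite bipartite graph G in which the degree of every vertex lies in the set {1, 2, 4, 5, 6} has a cyclic interval t-coloring for some positive integer t. -/
open SimpleGraph

/-- Edge colouring of regular bipartite multigraphs (König), edges in a finset `S`. -/
theorem konig_reg {E V : Type*} [DecidableEq E] [Fintype V] [DecidableEq V] (a b : E → V) :
    ∀ (k : ℕ) (S : Finset E), (∀ v, (S.filter (fun e => a e = v)).card = k) →
      (∀ v, (S.filter (fun e => b e = v)).card = k) →
      ∃ f : E → ℕ, (∀ e ∈ S, f e < k) ∧
        ∀ e ∈ S, ∀ e' ∈ S, f e = f e' → (a e = a e' ∨ b e = b e') → e = e' := by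
  intro k
  induction k with
  | zero =>
    intro S ha hb
    have hS : ∀ e ∉ (∅ : Finset E), e ∉ S := by
      intro e _ he
      have := ha (a e)
      rw [Finset.card_eq_zero] at this
      have h2 : e ∈ S.filter (fun e' => a e' = a e) := by simp [he]
      rw [this] at h2
      simp at h2
    exact ⟨fun _ => 0, fun e he => absurd he (hS e (by simp)),
      fun e he => absurd he (hS e (by simp))⟩
  | succ k ih =>
    intro S ha hb
    have hall := (Finset.all_card_le_biUnion_card_iff_exists_injective
      (fun v : V => (S.filter (fun e => a e = v)).image b)).1 (by
        intro s
        set N := s.biUnion (fun v : V => (S.filter (fun e => a e = v)).image b) with hN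
        have h1 : (S.filter (fun e => a e ∈ s)).card = s.card * (k+1) := by
          rw [Finset.card_eq_sum_card_fiberwise (f := a) (t := s)]
          · rw [← smul_eq_mul, ← Finset.sum_const]
            refine Finset.sum_congr rfl fun v hv => ?_
            rw [← ha v, Finset.filter_filter]
            congr 1
            ext e
            simp only [Finset.mem_filter]
            grind
          · intro e he
            simpa using (Finset.mem_filter.1 he).2
        have h2 : (S.filter (fun e => b e ∈ N)).card = N.card * (k+1) := by
          rw [Finset.card_eq_sum_card_fiberwise (f := b) (t := N)]
          · rw [← smul_eq_mul, ← Finset.sum_const]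
            refine Finset.sum_congr rfl fun v hv => ?_
            rw [← hb v, Finset.filter_filter]
            congr 1
            ext e
            simp only [Finset.mem_filter]
            grind
          · intro e he
            simpa using (Finset.mem_filter.1 he).2
        have h3 : S.filter (fun e => a e ∈ s) ⊆ S.filter (fun e => b e ∈ N) := by
          intro e he
          rw [Finset.mem_filter] at he ⊢
          refine ⟨he.1, ?_⟩
          rw [hN, Finset.mem_biUnion]
          exact ⟨a e, he.2, Finset.mem_image.2 ⟨e, by simp [he.1], rfl⟩⟩
        have h4 := Finset.card_le_card h3
        rw [h1, h2] at h4
        exact Nat.le_of_mul_le_mul_right h4 (Nat.succ_pos k))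
    obtain ⟨m, hm, hmt⟩ := hall
    have hex : ∀ v, ∃ e ∈ S, a e = v ∧ b e = m v := by
      intro v
      obtain ⟨e, he, hb'⟩ := Finset.mem_image.1 (hmt v)
      rw [Finset.mem_filter] at he
      exact ⟨e, he.1, he.2, hb'⟩
    choose ed hS hea heb using hex
    have hsurj := Finite.surjective_of_injective hm
    obtain ⟨f, hf1, hf2⟩ := ih (S.filter (fun e => e ≠ ed (a e)))
      (by
        intro v
        have : (S.filter (fun e => e ≠ ed (a e))).filter (fun e => a e = v)
            = (S.filter (fun e => a e = v)).erase (ed v) := by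
          ext e
          simp only [Finset.mem_filter, Finset.mem_erase]
          grind
        rw [this, Finset.card_erase_of_mem (by simp [hS, hea]), ha v]
        rfl)
      (by
        intro w
        obtain ⟨v, rfl⟩ := hsurj w
        have : (S.filter (fun e => e ≠ ed (a e))).filter (fun e => b e = m v)
            = (S.filter (fun e => b e = m v)).erase (ed v) := by
          ext e
          simp only [Finset.mem_filter, Finset.mem_erase]
          constructor
          · grind
          · rintro ⟨h1, h2, h3⟩
            refine ⟨⟨h2, fun h => h1 ?_⟩, h3⟩
            have : m (a e) = m v := by rw [← h3, ← heb, ← h]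
            rw [← hm this]; exact h
        rw [this, Finset.card_erase_of_mem (by simp [hS, heb]), hb]
        rfl)
    refine ⟨fun e => if e = ed (a e) then k else f e, ?_, ?_⟩
    · intro e he
      by_cases h : e = ed (a e)
      · simp [← h]
      · have := hf1 e (by simp [he, h])
        simp only [h, if_false]; omega
    · intro e he e' he' hff hor
      by_cases h : e = ed (a e) <;> by_cases h' : e' = ed (a e')
      · rcases hor with h1 | h1
        · rw [h, h', h1]
        · have : m (a e) = m (a e') := by rw [← heb, ← heb, ← h, ← h', h1]
          rw [h, h', hm this]
      · have := hf1 e' (by simp [he', h'])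
        simp only [h', if_false, if_pos h] at hff; omega
      · have := hf1 e (by simp [he, h])
        simp only [h, if_false, if_pos h'] at hff; omega
      · simp only [h, h', if_false] at hff
        exact hf2 e (by simp [he, h]) e' (by simp [he', h']) hff hor

/-- König for bipartite multigraphs with maximum degree at most `k`. -/
theorem konig {E A B : Type*} [Fintype E] [Finite A] [Finite B] [DecidableEq A]
    [DecidableEq B] (a : E → A) (b : E → B) (k : ℕ)
    (ha : ∀ v, (Finset.univ.filter (fun e => a e = v)).card ≤ k)
    (hb : ∀ v, (Finset.univ.filter (fun e => b e = v)).card ≤ k) :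
    ∃ f : E → ℕ, (∀ e, f e < k) ∧
        ∀ e e', f e = f e' → (a e = a e' ∨ b e = b e') → e = e' := by
  classical
  have := Fintype.ofFinite A
  have := Fintype.ofFinite B
  let dg : A ⊕ B → ℕ := Sum.elim (fun v => (Finset.univ.filter (fun e => a e = v)).card)
    (fun v => (Finset.univ.filter (fun e => b e = v)).card)
  have hdg : ∀ v, dg v ≤ k := by rintro (v | v); exacts [ha v, hb v]
  let D := Σ v : A ⊕ B, Fin (k - dg v)
  let a' : E ⊕ E ⊕ D → A ⊕ B :=
    Sum.elim (fun e => Sum.inl (a e)) (Sum.elim (fun e => Sum.inr (b e)) (fun d => d.1))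
  let b' : E ⊕ E ⊕ D → A ⊕ B :=
    Sum.elim (fun e => Sum.inr (b e)) (Sum.elim (fun e => Sum.inl (a e)) (fun d => d.1))
  have hD : ∀ v, (Finset.univ.filter (fun d : D => d.1 = v)).card = k - dg v := by
    intro v
    have : (Finset.univ.filter (fun d : D => d.1 = v))
        = (Finset.univ : Finset (Fin (k - dg v))).map (Function.Embedding.sigmaMk v) := by
      ext ⟨w, i⟩
      simp only [Finset.mem_filter, Finset.mem_univ, true_and, Finset.mem_map]
      constructor
      · rintro rfl; exact ⟨i, rfl⟩
      · rintro ⟨j, hj⟩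
        exact (congrArg Sigma.fst hj).symm
    rw [this]; simp
  have hsum : ∀ (p : E ⊕ E ⊕ D → Prop) [DecidablePred p], (Finset.univ.filter p).card
      = (Finset.univ.filter (fun e => p (Sum.inl e))).card
      + ((Finset.univ.filter (fun e => p (Sum.inr (Sum.inl e)))).card
      + (Finset.univ.filter (fun e => p (Sum.inr (Sum.inr e)))).card) := by
    intro p _
    simp only [Finset.card_filter, Fintype.sum_sum_type]
  obtain ⟨f, hf1, hf2⟩ := konig_reg a' b' k Finset.univ
    (by
      intro v
      have h := hdg v
      have h2 : (Finset.univ.filter (fun d : D => a' (Sum.inr (Sum.inr d)) = v)).card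
          = k - dg v := hD v
      rw [hsum, h2]
      rcases v with v | v <;> simp [a', dg] at h ⊢ <;> omega)
    (by
      intro v
      have h := hdg v
      have h2 : (Finset.univ.filter (fun d : D => b' (Sum.inr (Sum.inr d)) = v)).card
          = k - dg v := hD v
      rw [hsum, h2]
      rcases v with v | v <;> simp [b', dg] at h ⊢ <;> omega)
  refine ⟨fun e => f (Sum.inl e), fun e => hf1 _ (Finset.mem_univ _), fun e e' h hor => ?_⟩
  have := hf2 (Sum.inl e) (Finset.mem_univ _) (Sum.inl e') (Finset.mem_univ _) h
    (by rcases hor with h | h <;> simp [a', b', h])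
  exact Sum.inl_injective this


theorem exists_index {E A : Type*} [Fintype E] [DecidableEq A] (a : E → A) :
    ∃ idx : E → ℕ, (∀ e, idx e < (Finset.univ.filter (fun e' => a e' = a e)).card) ∧
      ∀ e e', a e = a e' → idx e = idx e' → e = e' := by
  classical
  have h : ∀ v : A, ∃ g : E → ℕ,
      (∀ e, a e = v → g e < (Finset.univ.filter (fun e' => a e' = v)).card) ∧
      ∀ e e', a e = v → a e' = v → g e = g e' → e = e' := by
    intro v
    let F := Finset.univ.filter (fun e' => a e' = v)
    refine ⟨fun e => if h : e ∈ F then (F.equivFin ⟨e, h⟩ : ℕ) else 0, ?_, ?_⟩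
    · intro e he
      have : e ∈ F := by simp [F, he]
      simp only [this, dif_pos]
      exact (F.equivFin ⟨e, this⟩).2
    · intro e e' he he' h
      have h1 : e ∈ F := by simp [F, he]
      have h2 : e' ∈ F := by simp [F, he']
      simp only [h1, h2, dif_pos] at h
      have := F.equivFin.injective (Fin.ext h)
      exact congrArg Subtype.val this
  choose g hg1 hg2 using h
  refine ⟨fun e => g (a e) e, fun e => hg1 _ e rfl, fun e e' h h' => ?_⟩
  refine hg2 (a e) e e' rfl h.symm ?_
  simpa [h] using h'

/-- Balanced splitting of the edges of a bipartite multigraph. -/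
theorem split {E A B : Type*} [Fintype E] [Finite A] [Finite B] [DecidableEq A]
    [DecidableEq B] (a : E → A) (b : E → B) :
    ∃ s : E → ℕ, (∀ e, s e < 2) ∧
      (∀ v i, (Finset.univ.filter (fun e => a e = v ∧ s e = i)).card
        ≤ ((Finset.univ.filter (fun e => a e = v)).card + 1) / 2) ∧
      (∀ v i, (Finset.univ.filter (fun e => b e = v ∧ s e = i)).card
        ≤ ((Finset.univ.filter (fun e => b e = v)).card + 1) / 2) := by
  classical
  obtain ⟨ia, ha1, ha2⟩ := exists_index a
  obtain ⟨ib, hb1, hb2⟩ := exists_index b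
  let N := Fintype.card E
  have hA : ∀ e, ia e / 2 < N := fun e =>
    lt_of_le_of_lt (Nat.div_le_self _ _) (lt_of_lt_of_le (ha1 e) (Finset.card_le_univ _))
  have hB : ∀ e, ib e / 2 < N := fun e =>
    lt_of_le_of_lt (Nat.div_le_self _ _) (lt_of_lt_of_le (hb1 e) (Finset.card_le_univ _))
  obtain ⟨s, hs1, hs2⟩ := konig (fun e => (a e, (⟨ia e / 2, hA e⟩ : Fin N)))
    (fun e => (b e, (⟨ib e / 2, hB e⟩ : Fin N))) 2
    (by
      rintro ⟨v, j⟩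
      refine le_trans (Finset.card_le_card_of_injOn ia (t := {2 * j.1, 2 * j.1 + 1}) ?_ ?_)
        Finset.card_le_two
      · intro e he
        simp only [Finset.coe_filter, Finset.mem_univ, true_and, Set.mem_ofPred_eq,
          Prod.mk.injEq, Fin.ext_iff] at he
        simp only [Finset.coe_insert, Finset.coe_singleton, Set.mem_insert_iff,
          Set.mem_singleton_iff]
        omega
      · intro e he e' he' h
        simp only [Finset.coe_filter, Finset.mem_univ, true_and, Set.mem_ofPred_eq,
          Prod.mk.injEq] at he he'
        exact ha2 e e' (he.1.trans he'.1.symm) h)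
    (by
      rintro ⟨v, j⟩
      refine le_trans (Finset.card_le_card_of_injOn ib (t := {2 * j.1, 2 * j.1 + 1}) ?_ ?_)
        Finset.card_le_two
      · intro e he
        simp only [Finset.coe_filter, Finset.mem_univ, true_and, Set.mem_ofPred_eq,
          Prod.mk.injEq, Fin.ext_iff] at he
        simp only [Finset.coe_insert, Finset.coe_singleton, Set.mem_insert_iff,
          Set.mem_singleton_iff]
        omega
      · intro e he e' he' h
        simp only [Finset.coe_filter, Finset.mem_univ, true_and, Set.mem_ofPred_eq,
          Prod.mk.injEq] at he he'
        exact hb2 e e' (he.1.trans he'.1.symm) h)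
  refine ⟨s, hs1, ?_, ?_⟩
  · intro v i
    conv_rhs => rw [← Finset.card_range (((Finset.univ.filter (fun e => a e = v)).card + 1) / 2)]
    refine Finset.card_le_card_of_injOn (fun e => ia e / 2) ?_ ?_
    · intro e he
      simp only [Finset.coe_filter, Finset.mem_univ, true_and, Set.mem_ofPred_eq] at he
      have := ha1 e
      rw [he.1] at this
      simp only [Finset.coe_range, Set.mem_Iio]
      omega
    · intro e he e' he' h
      simp only [Finset.coe_filter, Finset.mem_univ, true_and, Set.mem_ofPred_eq] at he he'
      refine hs2 e e' (he.2.trans he'.2.symm) (Or.inl ?_)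
      simp only [Prod.mk.injEq, Fin.mk.injEq]
      exact ⟨he.1.trans he'.1.symm, h⟩
  · intro v i
    conv_rhs => rw [← Finset.card_range (((Finset.univ.filter (fun e => b e = v)).card + 1) / 2)]
    refine Finset.card_le_card_of_injOn (fun e => ib e / 2) ?_ ?_
    · intro e he
      simp only [Finset.coe_filter, Finset.mem_univ, true_and, Set.mem_ofPred_eq] at he
      have := hb1 e
      rw [he.1] at this
      simp only [Finset.coe_range, Set.mem_Iio]
      omega
    · intro e he e' he' h
      simp only [Finset.coe_filter, Finset.mem_univ, true_and, Set.mem_ofPred_eq] at he he'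
      refine hs2 e e' (he.2.trans he'.2.symm) (Or.inr ?_)
      simp only [Prod.mk.injEq, Fin.mk.injEq]
      exact ⟨he.1.trans he'.1.symm, h⟩

/-- The combinatorial core: colours are `2 * g e + h e + 1`. -/
theorem core_s8 {E V : Type*} [Fintype E] [Fintype V] [DecidableEq V] (x y : E → V)
    (side : V → Prop) (hx : ∀ e, side (x e)) (hy : ∀ e, ¬ side (y e)) (r : V → ℕ)
    (hr : ∀ v, (Finset.univ.filter (fun e => x e = v ∨ y e = v)).card ≤ 2 * (3 - r v))
    (hr3 : ∀ v, r v ≤ 3) :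
    ∃ g h : E → ℕ, (∀ e, g e < 3) ∧ (∀ e, h e < 2) ∧
      (∀ e e' v, (x e = v ∨ y e = v) → (x e' = v ∨ y e' = v) → g e = g e' → h e = h e' →
        e = e') ∧
      ∀ v, ∃ d : Fin (r v) → ℕ, (∀ i, d i < 3) ∧ Function.Injective d ∧
        ∀ e i, (x e = v ∨ y e = v) → g e ≠ d i := by
  classical
  obtain ⟨s, hs, hsx, hsy⟩ := split x y
  have hne : ∀ e e', x e ≠ y e' := fun e e' h => hy e' (h ▸ hx e)
  let D := Σ v : V, Fin (r v)
  let a : E ⊕ D → V := Sum.elim (fun e => if s e = 0 then x e else y e) (fun d => d.1)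
  let b : E ⊕ D → V := Sum.elim (fun e => if s e = 0 then y e else x e) (fun d => d.1)
  have hD : ∀ v, (Finset.univ.filter (fun d : D => d.1 = v)).card = r v := by
    intro v
    have : (Finset.univ.filter (fun d : D => d.1 = v))
        = (Finset.univ : Finset (Fin (r v))).map (Function.Embedding.sigmaMk v) := by
      ext ⟨w, i⟩
      simp only [Finset.mem_filter, Finset.mem_univ, true_and, Finset.mem_map]
      constructor
      · rintro rfl; exact ⟨i, rfl⟩
      · rintro ⟨j, hj⟩
        exact (congrArg Sigma.fst hj).symm
    rw [this]; simp
  have hsum : ∀ (p : E ⊕ D → Prop) [DecidablePred p], (Finset.univ.filter p).card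
      = (Finset.univ.filter (fun e => p (Sum.inl e))).card
      + (Finset.univ.filter (fun e => p (Sum.inr e))).card := by
    intro p _
    simp only [Finset.card_filter, Fintype.sum_sum_type]
  have hxl : ∀ v i, (Finset.univ.filter (fun e => x e = v ∧ s e = i)).card ≤ 3 - r v := by
    intro v i
    have h1 := hsx v i
    have h2 := hr v
    have h3 : (Finset.univ.filter (fun e => x e = v)).card ≤
      (Finset.univ.filter (fun e => x e = v ∨ y e = v)).card :=
      Finset.card_le_card (fun e => by simp; tauto)
    omega
  have hyl : ∀ v i, (Finset.univ.filter (fun e => y e = v ∧ s e = i)).card ≤ 3 - r v := by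
    intro v i
    have h1 := hsy v i
    have h2 := hr v
    have h3 : (Finset.univ.filter (fun e => y e = v)).card ≤
      (Finset.univ.filter (fun e => x e = v ∨ y e = v)).card :=
      Finset.card_le_card (fun e => by simp; tauto)
    omega
  obtain ⟨g, hg1, hg2⟩ := konig a b 3
    (by
      intro v
      have h2 : (Finset.univ.filter (fun d : D => a (Sum.inr d) = v)).card = r v := hD v
      rw [hsum, h2]
      have h3 := hr3 v
      have h4 : (Finset.univ.filter (fun e : E => a (Sum.inl e) = v)).card ≤ 3 - r v := by
        by_cases hv : side v
        · refine le_trans (Finset.card_le_card ?_) (hxl v 0)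
          intro e
          simp only [Finset.mem_filter, Finset.mem_univ, true_and, a, Sum.elim_inl]
          grind
        · refine le_trans (Finset.card_le_card ?_) (hyl v 1)
          intro e
          simp only [Finset.mem_filter, Finset.mem_univ, true_and, a, Sum.elim_inl]
          have := hs e
          grind
      omega)
    (by
      intro v
      have h2 : (Finset.univ.filter (fun d : D => b (Sum.inr d) = v)).card = r v := hD v
      rw [hsum, h2]
      have h3 := hr3 v
      have h4 : (Finset.univ.filter (fun e : E => b (Sum.inl e) = v)).card ≤ 3 - r v := by
        by_cases hv : side v
        · refine le_trans (Finset.card_le_card ?_) (hxl v 1)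
          intro e
          simp only [Finset.mem_filter, Finset.mem_univ, true_and, b, Sum.elim_inl]
          have := hs e
          grind
        · refine le_trans (Finset.card_le_card ?_) (hyl v 0)
          intro e
          simp only [Finset.mem_filter, Finset.mem_univ, true_and, b, Sum.elim_inl]
          grind
      omega)
  obtain ⟨h, hh1, hh2⟩ := konig
    (fun e => (x e, (⟨g (Sum.inl e), hg1 _⟩ : Fin 3)))
    (fun e => (y e, (⟨g (Sum.inl e), hg1 _⟩ : Fin 3))) 2
    (by
      rintro ⟨v, j⟩
      rw [← Finset.card_range 2]
      refine Finset.card_le_card_of_injOn s (fun e _ => by simpa using hs e) ?_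
      intro e he e' he' hss
      simp only [Finset.coe_filter, Finset.mem_univ, true_and, Set.mem_ofPred_eq,
          Prod.mk.injEq, Fin.ext_iff] at he he'
      refine Sum.inl_injective (hg2 (Sum.inl e) (Sum.inl e') (he.2.trans he'.2.symm) ?_)
      simp only [a, b, Sum.elim_inl, hss, he.1, he'.1]
      split_ifs <;> simp)
    (by
      rintro ⟨v, j⟩
      rw [← Finset.card_range 2]
      refine Finset.card_le_card_of_injOn s (fun e _ => by simpa using hs e) ?_
      intro e he e' he' hss
      simp only [Finset.coe_filter, Finset.mem_univ, true_and, Set.mem_ofPred_eq,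
          Prod.mk.injEq, Fin.ext_iff] at he he'
      refine Sum.inl_injective (hg2 (Sum.inl e) (Sum.inl e') (he.2.trans he'.2.symm) ?_)
      simp only [a, b, Sum.elim_inl, hss, he.1, he'.1]
      split_ifs <;> simp)
  refine ⟨fun e => g (Sum.inl e), h, fun e => hg1 _, hh1, ?_, ?_⟩
  · intro e e' v hv hv' hgg hhh
    refine hh2 e e' hhh ?_
    simp only [Prod.mk.injEq, Fin.mk.injEq]
    have h1 := hne e e'
    have h2 := hne e' e
    grind
  · intro v
    refine ⟨fun i => g (Sum.inr ⟨v, i⟩), fun i => hg1 _, ?_, ?_⟩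
    · intro i j hij
      have := Sum.inr_injective (hg2 (Sum.inr ⟨v, i⟩) (Sum.inr ⟨v, j⟩) hij (Or.inl rfl))
      exact eq_of_heq (Sigma.mk.inj this).2
    · intro e i hv hgg
      have := hg2 (Sum.inl e) (Sum.inr ⟨v, i⟩) hgg (by
        simp only [a, b, Sum.elim_inl, Sum.elim_inr]
        split_ifs <;> tauto)
      simp at this

theorem interval_lemma (K : Finset ℕ) (n : ℕ) (hn : n ∈ ({1, 2, 4, 5, 6} : Set ℕ))
    (hK : K.card = n) (hK6 : K ⊆ Finset.Icc 1 6) (d : Fin ((6 - n) / 2) → ℕ)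
    (hd : ∀ i, d i < 3) (hinj : Function.Injective d)
    (hKd : ∀ m ∈ K, ∀ i, m ≠ 2 * d i + 1 ∧ m ≠ 2 * d i + 2) :
    IsIntervalSet (K : Set ℕ) ∨ IsIntervalSet (Set.Icc 1 6 \ (K : Set ℕ)) := by
  have hcard : (Finset.Icc 1 6 \ K).card = 6 - n := by
    rw [Finset.card_sdiff_of_subset hK6, hK]; simp
  simp only [Set.mem_insert_iff, Set.mem_singleton_iff] at hn
  rcases hn with rfl | rfl | rfl | rfl | rfl
  · left
    obtain ⟨m, rfl⟩ := Finset.card_eq_one.1 hK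
    exact ⟨m, m, by simp⟩
  · left
    have h0 := hd 0
    have h1 := hd 1
    have h01 : d 0 ≠ d 1 := fun h => by
      have := hinj h
      simp at this
    have hsub : K ⊆ Finset.Icc (2 * (3 - d 0 - d 1) + 1) (2 * (3 - d 0 - d 1) + 2) := by
      intro m hm
      have a0 := hKd m hm 0
      have a1 := hKd m hm 1
      have a2 := Finset.mem_Icc.1 (hK6 hm)
      rw [Finset.mem_Icc]
      omega
    have := Finset.eq_of_subset_of_card_le hsub (by rw [hK, Nat.card_Icc]; omega)
    exact ⟨_, _, by rw [this, Finset.coe_Icc]⟩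
  · right
    have h0 := hd 0
    have hsub : Finset.Icc (2 * d 0 + 1) (2 * d 0 + 2) ⊆ Finset.Icc 1 6 \ K := by
      intro m hm
      rw [Finset.mem_Icc] at hm
      rw [Finset.mem_sdiff, Finset.mem_Icc]
      refine ⟨by omega, fun hmK => ?_⟩
      have a0 := hKd m hmK 0
      omega
    have := Finset.eq_of_subset_of_card_le hsub (by rw [hcard, Nat.card_Icc]; omega)
    refine ⟨2 * d 0 + 1, 2 * d 0 + 2, ?_⟩
    rw [← Finset.coe_Icc, ← Finset.coe_Icc, this, Finset.coe_sdiff]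
  · right
    obtain ⟨m, hm⟩ := Finset.card_eq_one.1 hcard
    refine ⟨m, m, ?_⟩
    rw [← Finset.coe_Icc, ← Finset.coe_sdiff, hm]
    simp
  · left
    have := Finset.eq_of_subset_of_card_le hK6 (by rw [hK]; simp)
    exact ⟨1, 6, by rw [this, Finset.coe_Icc]⟩

/-- every finite bipartite graph in which all vertex degrees lie in
`{1, 2, 4, 5, 6}` has a cyclic interval `t`-coloring for some positive `t`. -/
theorem stmt_8 {V : Type*} [Fintype V] (G : SimpleGraph V) [DecidableRel G.Adj]
    (hbip : G.Colorable 2)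
    (hdeg : ∀ v : V, G.degree v ∈ ({1, 2, 4, 5, 6} : Set ℕ)) :
    ∃ t : ℕ, 0 < t ∧ ∃ c : Sym2 V → ℕ, IsCyclicIntervalColoring G t c := by
  classical
  obtain ⟨col⟩ := hbip
  have hex : ∀ e : G.edgeSet, ∃ x y : V, e.1 = s(x, y) ∧ col x = 0 ∧ ¬ col y = 0 := by
    rintro ⟨e, he⟩
    induction e using Sym2.ind with
    | _ u w =>
      have hne : col u ≠ col w := col.valid he
      by_cases hu : col u = 0
      · exact ⟨u, w, rfl, hu, fun h => hne (hu.trans h.symm)⟩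
      · refine ⟨w, u, Sym2.eq_swap, ?_, hu⟩
        omega
  choose x y hxy hx hy using hex
  have hmem : ∀ (e : G.edgeSet) v, v ∈ e.1 ↔ (x e = v ∨ y e = v) := by
    intro e v
    rw [hxy e, Sym2.mem_iff]
    grind
  have hcard : ∀ v, (Finset.univ.filter (fun e => x e = v ∨ y e = v)).card = G.degree v := by
    intro v
    rw [← G.card_incidenceFinset_eq_degree, ← Finset.card_map (Function.Embedding.subtype _)]
    congr 1
    ext e
    simp only [Finset.mem_map, Finset.mem_filter, Finset.mem_univ, true_and,
      Function.Embedding.subtype_apply, mem_incidenceFinset, incidenceSet]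
    constructor
    · rintro ⟨e, he, rfl⟩
      exact ⟨e.2, (hmem e v).2 he⟩
    · rintro ⟨h1, h2⟩
      exact ⟨⟨e, h1⟩, (hmem ⟨e, h1⟩ v).1 h2, rfl⟩
  obtain ⟨g, h, hg, hh, hprop, hdum⟩ := core_s8 x y (fun v => col v = 0) hx hy
    (fun v => (6 - G.degree v) / 2)
    (by
      intro v
      rw [hcard]
      have := hdeg v
      simp only [Set.mem_insert_iff, Set.mem_singleton_iff] at this
      omega)
    (by intro v; omega)
  let c : Sym2 V → ℕ := fun e =>
    if he : e ∈ G.edgeSet then 2 * g ⟨e, he⟩ + h ⟨e, he⟩ + 1 else 0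
  have hc : ∀ e : G.edgeSet, c e.1 = 2 * g e + h e + 1 := by
    intro e
    simp only [c, e.2, dif_pos]
  have hinj : ∀ e e' : G.edgeSet, ∀ v, v ∈ e.1 → v ∈ e'.1 → c e.1 = c e'.1 → e = e' := by
    intro e e' v hv hv' hcc
    rw [hc, hc] at hcc
    have h1 := hh e
    have h2 := hh e'
    exact hprop e e' v ((hmem e v).1 hv) ((hmem e' v).1 hv') (by omega) (by omega)
  refine ⟨6, by norm_num, c, ⟨?_, ?_⟩, ?_⟩
  · intro e he
    rw [hc ⟨e, he⟩, Set.mem_Icc]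
    have h1 := hg ⟨e, he⟩
    have h2 := hh ⟨e, he⟩
    omega
  · rintro e he e' he' hne ⟨v, hv, hv'⟩ hcc
    exact hne (congrArg Subtype.val (hinj ⟨e, he⟩ ⟨e', he'⟩ v hv hv' hcc))
  · intro v
    obtain ⟨d, hd1, hd2, hd3⟩ := hdum v
    have hS : colorsAt G c v = (((G.incidenceFinset v).image c : Finset ℕ) : Set ℕ) := by
      rw [Finset.coe_image, colorsAt]
      congr 1
      ext e
      simp
    rw [hS]
    refine interval_lemma _ (G.degree v) (hdeg v) ?_ ?_ d hd1 hd2 ?_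
    · rw [Finset.card_image_of_injOn, G.card_incidenceFinset_eq_degree]
      intro e he e' he' hcc
      simp only [Finset.mem_coe, mem_incidenceFinset] at he he'
      exact congrArg Subtype.val (hinj ⟨e, he.1⟩ ⟨e', he'.1⟩ v he.2 he'.2 hcc)
    · intro m hm
      obtain ⟨e, he, rfl⟩ := Finset.mem_image.1 hm
      rw [mem_incidenceFinset] at he
      rw [hc ⟨e, he.1⟩, Finset.mem_Icc]
      have h1 := hg ⟨e, he.1⟩
      have h2 := hh ⟨e, he.1⟩
      omega
    · intro m hm i
      obtain ⟨e, he, rfl⟩ := Finset.mem_image.1 hm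
      rw [mem_incidenceFinset] at he
      rw [hc ⟨e, he.1⟩]
      have h2 := hh ⟨e, he.1⟩
      have h3 := hd3 ⟨e, he.1⟩ i ((hmem ⟨e, he.1⟩ v).1 he.2)
      omega
end

section
/- Let a and b be positive integers with a < b and gcd(a, b−1) = 1. If every finite (a,b)-biregular graph has a cyclic interval b-coloring, then every finite (a, b−1)-biregular graph has a cyclic interval b-coloring. -/
open SimpleGraph

/-- An `(a,b)`-biregular graph: the vertex set is partitioned into two nonempty
independent parts `X` and `Xᶜ`, every edge joins the parts, every vertex of `X`
has degree `a`, and every vertex of `Xᶜ` has degree `b`. -/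
def IsBiregular {V : Type*} [Fintype V] (G : SimpleGraph V) [DecidableRel G.Adj]
    (a b : ℕ) : Prop :=
  ∃ X : Set V, X.Nonempty ∧ Xᶜ.Nonempty ∧
    (∀ u v : V, G.Adj u v → (u ∈ X ↔ v ∉ X)) ∧
    (∀ v ∈ X, G.degree v = a) ∧ (∀ v ∈ Xᶜ, G.degree v = b)


/-- Add new vertices `Fin k` to `G`, joining `y ∉ X` to the new vertex `(e y).1`. -/
def extGraph {V : Type} (G : SimpleGraph V) (X : Set V) {k a : ℕ}
    (e : {v // v ∈ Xᶜ} ≃ Fin k × Fin a) : SimpleGraph (V ⊕ Fin k) where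
  Adj p q := match p, q with
    | Sum.inl u, Sum.inl v => G.Adj u v
    | Sum.inl u, Sum.inr i => ∃ h : u ∈ Xᶜ, (e ⟨u, h⟩).1 = i
    | Sum.inr i, Sum.inl u => ∃ h : u ∈ Xᶜ, (e ⟨u, h⟩).1 = i
    | Sum.inr _, Sum.inr _ => False
  symm := ⟨by
    rintro (u | i) (v | j) h
    · exact SimpleGraph.Adj.symm (G := G) h
    · exact h
    · exact h
    · exact h⟩
  loopless := ⟨by
    rintro (u | i) h
    · exact G.loopless.irrefl u h
    · exact h⟩

theorem dvd_card_aux {V : Type} [Fintype V] (G : SimpleGraph V) [DecidableRel G.Adj]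
    (a d : ℕ) (hgcd : Nat.gcd a d = 1) (X : Set V)
    (hX : ∀ u v : V, G.Adj u v → (u ∈ X ↔ v ∉ X))
    (h1 : ∀ v ∈ X, G.degree v = a) (h2 : ∀ v ∈ Xᶜ, G.degree v = d) :
    a ∣ Nat.card {v // v ∈ Xᶜ} := by
  classical
  have hb : G.IsBipartiteWith (X.toFinset : Set V) ((Xᶜ).toFinset : Set V) := by
    refine ⟨?_, ?_⟩
    · simpa using disjoint_compl_right
    · intro u v h
      have := hX u v h
      simp only [Set.coe_toFinset, Set.mem_compl_iff]
      tauto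
  have h := isBipartiteWith_sum_degrees_eq hb
  rw [Finset.sum_congr rfl (fun v hv => h1 v (by simpa using hv)),
    Finset.sum_congr rfl (fun v hv => h2 v (by simpa using hv))] at h
  simp only [Finset.sum_const, smul_eq_mul] at h
  have h3 : a ∣ (Xᶜ).toFinset.card * d := ⟨_, h.symm.trans (mul_comm _ _)⟩
  have h4 := (Nat.Coprime.dvd_of_dvd_mul_right (show Nat.Coprime a d from hgcd) h3)
  rw [Set.toFinset_card] at h4
  rw [Nat.card_eq_fintype_card]
  exact h4

theorem ext_biregular {V : Type} [Fintype V] (G : SimpleGraph V) [DecidableRel G.Adj]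
    (a d : ℕ) (X : Set V) (hne : X.Nonempty) (hne' : (Xᶜ).Nonempty)
    (hX : ∀ u v : V, G.Adj u v → (u ∈ X ↔ v ∉ X))
    (h1 : ∀ v ∈ X, G.degree v = a) (h2 : ∀ v ∈ Xᶜ, G.degree v = d) {k : ℕ}
    (e : {v // v ∈ Xᶜ} ≃ Fin k × Fin a) [DecidableRel (extGraph G X e).Adj] :
    IsBiregular (extGraph G X e) a (d + 1) := by
  classical
  refine ⟨Sum.inl '' X ∪ Set.range Sum.inr, ?_, ?_, ?_, ?_, ?_⟩
  · obtain ⟨x, hx⟩ := hne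
    exact ⟨Sum.inl x, Or.inl ⟨x, hx, rfl⟩⟩
  · obtain ⟨x, hx⟩ := hne'
    refine ⟨Sum.inl x, ?_⟩
    simpa using hx
  · rintro (u | i) (v | j) h
    · simpa using hX u v h
    · obtain ⟨h, -⟩ := h
      simpa using h
    · obtain ⟨h, -⟩ := h
      simpa using h
    · exact h.elim
  · rintro (u | i) h
    · have hu : u ∈ X := by simpa using h
      refine Eq.trans ?_ (h1 u hu)
      rw [← card_neighborFinset_eq_degree, ← card_neighborFinset_eq_degree]
      rw [← Finset.card_map (⟨Sum.inl, Sum.inl_injective⟩ : V ↪ V ⊕ Fin k)]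
      congr 1
      ext (v | j)
      · rw [mem_neighborFinset]; simp [extGraph]
      · rw [mem_neighborFinset]; simp [extGraph, hu]
    · rw [← card_neighborFinset_eq_degree]
      have : (extGraph G X e).neighborFinset (Sum.inr i) =
          (Finset.univ : Finset (Fin a)).image (fun j => Sum.inl (e.symm (i, j)).1) := by
        ext (v | j)
        · simp only [mem_neighborFinset, Finset.mem_image, Finset.mem_univ, true_and,
            Sum.inl.injEq]
          constructor
          · rintro ⟨hv, hi⟩
            subst hi
            exact ⟨(e ⟨v, hv⟩).2, by simp⟩
          · rintro ⟨j, rfl⟩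
            exact ⟨(e.symm (i, j)).2, by simp⟩
        · rw [mem_neighborFinset]; simp [extGraph]
      rw [this, Finset.card_image_of_injective]
      · simp
      · intro j j' h
        have := e.symm.injective (Subtype.ext (Sum.inl_injective h))
        exact (Prod.ext_iff.1 this).2
  · rintro (u | i) h
    · have hu : u ∈ Xᶜ := by simpa using h
      rw [← h2 u hu, ← card_neighborFinset_eq_degree, ← card_neighborFinset_eq_degree]
      rw [← Finset.card_map (⟨Sum.inl, Sum.inl_injective⟩ : V ↪ V ⊕ Fin k)]
      rw [← Finset.card_insert_of_notMem (a := Sum.inr (e ⟨u, hu⟩).1) (by simp)]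
      congr 1
      ext (v | j)
      · rw [mem_neighborFinset]; simp [extGraph]
      · have hu' : u ∉ X := hu
        rw [mem_neighborFinset]; simp [extGraph, hu', eq_comm]
    · simp at h

theorem stmt_10 (a b : ℕ) (ha : 0 < a) (hab : a < b) (hgcd : Nat.gcd a (b - 1) = 1)
    (hyp : ∀ (W : Type) [Fintype W] (H : SimpleGraph W) [DecidableRel H.Adj],
      IsBiregular H a b → ∃ c : Sym2 W → ℕ, IsCyclicIntervalColoring H b c)
    {V : Type} [Fintype V] (G : SimpleGraph V) [DecidableRel G.Adj]
    (hbireg : IsBiregular G a (b - 1)) :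
    ∃ c : Sym2 V → ℕ, IsCyclicIntervalColoring G b c := by
  classical
  obtain ⟨X, hne, hne', hX, h1, h2⟩ := hbireg
  obtain ⟨k, hk⟩ := dvd_card_aux G a (b - 1) hgcd X hX h1 h2
  have e : {v // v ∈ Xᶜ} ≃ Fin k × Fin a := by
    apply Fintype.equivOfCardEq
    rw [← Nat.card_eq_fintype_card, hk]
    simp [mul_comm]
  have hb := ext_biregular G a (b - 1) X hne hne' hX h1 h2 e
  rw [Nat.sub_add_cancel (by omega)] at hb
  obtain ⟨c, ⟨hc1, hc2⟩, hc3⟩ := hyp _ _ hb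
  have hedge : ∀ s ∈ G.edgeSet, Sym2.map Sum.inl s ∈ (extGraph G X e).edgeSet := by
    intro s
    induction s with
    | _ u v => exact fun h => h
  have hinj : Function.Injective (Sym2.map (Sum.inl : V → V ⊕ Fin k)) :=
    Sym2.map.injective Sum.inl_injective
  have hprop : IsProperEdgeColoring G b (fun s => c (Sym2.map Sum.inl s)) := by
    refine ⟨fun s hs => hc1 _ (hedge s hs), ?_⟩
    rintro s hs t ht hst ⟨v, hvs, hvt⟩
    exact hc2 _ (hedge s hs) _ (hedge t ht) (fun h => hst (hinj h))
      ⟨Sum.inl v, Sym2.mem_map.2 ⟨v, hvs, rfl⟩, Sym2.mem_map.2 ⟨v, hvt, rfl⟩⟩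
  refine ⟨_, hprop, fun v => ?_⟩
  by_cases hv : v ∈ X
  · have : colorsAt G (fun s => c (Sym2.map Sum.inl s)) v =
        colorsAt (extGraph G X e) c (Sum.inl v) := by
      unfold colorsAt
      ext n
      constructor
      · rintro ⟨s, ⟨hs, hvs⟩, rfl⟩
        exact ⟨_, ⟨hedge s hs, Sym2.mem_map.2 ⟨v, hvs, rfl⟩⟩, rfl⟩
      · rintro ⟨s, ⟨hs, hvs⟩, rfl⟩
        obtain ⟨w, rfl⟩ := Sym2.mem_iff_exists.1 hvs
        rcases w with w | j
        · exact ⟨s(v, w), ⟨hs, Sym2.mem_mk_left _ _⟩, rfl⟩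
        · obtain ⟨h, -⟩ := hs
          exact absurd hv h
    rw [this]
    exact hc3 _
  · right
    set c' : Sym2 V → ℕ := fun s => c (Sym2.map Sum.inl s)
    have hcard : (colorsAt G c' v).ncard = b - 1 := by
      unfold colorsAt
      rw [Set.InjOn.ncard_image, ← h2 v hv, ← card_incidenceSet_eq_degree,
        ← Nat.card_eq_fintype_card]
      · rfl
      · intro s hs t ht hst
        by_contra hne
        exact hprop.2 s hs.1 t ht.1 hne ⟨v, hs.2, ht.2⟩ hst
    have hsub : colorsAt G c' v ⊆ Set.Icc 1 b := by
      rintro _ ⟨s, hs, rfl⟩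
      exact hprop.1 s hs.1
    have hfin : (colorsAt G c' v).Finite := (Set.finite_Icc 1 b).subset hsub
    have h := Set.ncard_sdiff hsub hfin
    have hIcc : (Set.Icc 1 b).ncard = b := by
      rw [← Finset.coe_Icc, Set.ncard_coe_finset]
      simp
    rw [hcard, hIcc, show b - (b - 1) = 1 by omega, Set.ncard_eq_one] at h
    obtain ⟨x, hx⟩ := h
    exact ⟨x, x, by rw [hx, Set.Icc_self]⟩
end

section
/- Every finite (4,7)-biregular graph G has a cyclic interval t-coloring for some t ≤ 8. -/
open SimpleGraph

open Classical in
theorem aux_ffree {E : Type*} (s t : E → E) (hs : ∀ e, s (s e) = e) (ht : ∀ e, t (t e) = e)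
    (hs' : ∀ e, s e ≠ e) (ht' : ∀ e, t e ≠ e) :
    ∃ f : E → Bool, (∀ e, f (s e) ≠ f e) ∧ (∀ e, f (t e) ≠ f e) := by
  let S : Equiv.Perm E := ⟨s, s, hs, hs⟩
  let T : Equiv.Perm E := ⟨t, t, ht, ht⟩
  have hS : S * S = 1 := by ext e; exact hs e
  have hT : T * T = 1 := by ext e; exact ht e
  have hSi : S⁻¹ = S := inv_eq_of_mul_eq_one_left hS
  have hTi : T⁻¹ = T := inv_eq_of_mul_eq_one_left hT
  let P : Equiv.Perm E := S * T
  have hconj : S * P * S⁻¹ = P⁻¹ := by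
    simp only [P, mul_inv_rev, hSi, hTi]
    rw [← mul_assoc, hS, one_mul]
  have hconjz : ∀ n : ℤ, S * P ^ n = P ^ (-n) * S := by
    intro n
    have : S * P ^ n * S⁻¹ = P ^ (-n) := by
      rw [← conj_zpow, hconj, inv_zpow, zpow_neg]
    rw [← this]; group
  have key : ∀ e, ¬ P.SameCycle e (S e) := by
    rintro e ⟨n, hn⟩
    rcases Int.even_or_odd' n with ⟨m, hm | hm⟩
    · apply hs' ((P ^ m) e)
      change (S * P ^ m) e = _
      rw [hconjz, Equiv.Perm.mul_apply, ← hn, ← Equiv.Perm.mul_apply, ← zpow_add]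
      congr 2; omega
    · apply ht' ((P ^ m) e)
      apply S.injective
      change (P * P ^ m) e = (S * P ^ m) e
      rw [hconjz, Equiv.Perm.mul_apply (P ^ (-m)), ← hn, ← Equiv.Perm.mul_apply, ← zpow_add,
        ← zpow_one_add]
      congr 2; omega
  have hSc : ∀ a b, P.SameCycle a b → P.SameCycle (S a) (S b) := by
    rintro a b ⟨n, rfl⟩
    refine ⟨-n, ?_⟩
    change (P ^ (-n) * S) a = (S * P ^ n) a
    rw [hconjz]
  let Q := Quotient (Equiv.Perm.SameCycle.setoid P)
  let mk : E → Q := fun e => Quotient.mk _ e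
  have hmk : ∀ a b, mk a = mk b ↔ P.SameCycle a b := by
    intro a b; exact Quotient.eq
  let _ : LinearOrder Q := linearOrderOfSTO (WellOrderingRel (α := Q))
  have hts : ∀ e, mk (t e) = mk (s e) := by
    intro e
    rw [hmk]
    refine ⟨1, ?_⟩
    change s (t (t e)) = s e
    rw [ht]
  have hss : ∀ e, mk (s (s e)) = mk e := by intro e; rw [hs]
  have hst : ∀ e, mk (s (t e)) = mk e := by
    intro e
    rw [hmk]
    have := hSc _ _ ((hmk _ _).1 (hts e))
    change P.SameCycle (s (t e)) (s (s e)) at this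
    rwa [hs] at this
  have hne : ∀ e, mk e ≠ mk (s e) := fun e h => key e ((hmk _ _).1 h)
  refine ⟨fun e => decide (mk e < mk (s e)), ?_, ?_⟩
  · intro e h
    simp only [hss, decide_eq_decide] at h
    rcases lt_or_gt_of_ne (hne e) with h1 | h1
    · exact lt_asymm h1 (h.2 h1)
    · exact lt_asymm h1 (h.1 h1)
  · intro e h
    simp only [hst, hts, decide_eq_decide] at h
    rcases lt_or_gt_of_ne (hne e) with h1 | h1
    · exact lt_asymm h1 (h.2 h1)
    · exact lt_asymm h1 (h.1 h1)

open Classical in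
theorem aux_inv {E : Type*} (s t : E → E) (hs : ∀ e, s (s e) = e) (ht : ∀ e, t (t e) = e) :
    ∃ f : E → Bool, (∀ e, s e ≠ e → f (s e) ≠ f e) ∧ (∀ e, t e ≠ e → f (t e) ≠ f e) := by
  have ext : ∀ s : E → E, (∀ e, s (s e) = e) → ∃ s' : E × Bool → E × Bool,
      (∀ x, s' (s' x) = x) ∧ (∀ x, s' x ≠ x) ∧ ∀ e, s e ≠ e → s' (e, true) = (s e, true) := by
    intro s hs
    refine ⟨fun x => if s x.1 = x.1 then (x.1, !x.2) else (s x.1, x.2), ?_, ?_, ?_⟩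
    · rintro ⟨e, b⟩
      by_cases h : s e = e
      · simp [h]
      · simp [h, hs, Ne.symm h]
    · rintro ⟨e, b⟩
      by_cases h : s e = e
      · simp [h]
      · simp [h]
    · intro e h; simp [h]
  obtain ⟨s', h1, h2, h3⟩ := ext s hs
  obtain ⟨t', k1, k2, k3⟩ := ext t ht
  obtain ⟨f, hf, hf'⟩ := aux_ffree s' t' h1 k1 h2 k2
  refine ⟨fun e => f (e, true), ?_, ?_⟩
  · intro e he; dsimp only; rw [← h3 e he]; exact hf _
  · intro e he; dsimp only; rw [← k3 e he]; exact hf' _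

theorem aux_fin (n : ℕ) : ∃ s : Fin n → Fin n, (∀ e, s (s e) = e) ∧
    ∀ e e', s e = e → s e' = e' → e = e' := by
  refine ⟨fun i => if h : i.1 % 2 = 0 then (if h' : i.1 + 1 < n then ⟨i.1 + 1, h'⟩ else i)
    else ⟨i.1 - 1, by omega⟩, ?_, ?_⟩
  · intro e
    apply Fin.ext
    dsimp only
    split_ifs <;> simp_all <;> omega
  · intro e e' h h'
    apply Fin.ext
    have := congrArg Fin.val h
    have := congrArg Fin.val h'
    dsimp only at *
    split_ifs at * <;> simp_all <;> omega

theorem aux_pair {E A : Type*} [Finite E] (p : E → A) : ∃ s : E → E, (∀ e, s (s e) = e) ∧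
    (∀ e, p (s e) = p e) ∧ ∀ e e', s e = e → s e' = e' → p e = p e' → e = e' := by
  have h : ∀ a, ∃ s : {e // p e = a} → {e // p e = a}, (∀ e, s (s e) = e) ∧
      ∀ e e', s e = e → s e' = e' → e = e' := by
    intro a
    obtain ⟨n, ⟨g⟩⟩ := Finite.exists_equiv_fin {e // p e = a}
    obtain ⟨s, h1, h2⟩ := aux_fin n
    refine ⟨fun e => g.symm (s (g e)), by intro e; simp [h1], ?_⟩
    intro e e' h h'
    apply g.injective
    apply h2
    · have := congrArg g h; simpa using this
    · have := congrArg g h'; simpa using this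
  choose s h1 h2 using h
  have hp : ∀ e, p (s (p e) ⟨e, rfl⟩).1 = p e := fun e => (s (p e) ⟨e, rfl⟩).2
  have hgen : ∀ a e (h : p e = a), (s (p e) ⟨e, rfl⟩).1 = (s a ⟨e, h⟩).1 := by
    rintro a e rfl; rfl
  refine ⟨fun e => (s (p e) ⟨e, rfl⟩).1, ?_, hp, ?_⟩
  · intro e
    dsimp only
    rw [hgen (p e) _ (hp e)]
    simp [h1]
  · intro e e' h h' hpe
    have := h2 (p e') ⟨e, hpe⟩ ⟨e', rfl⟩ ?_ ?_
    · exact congrArg Subtype.val this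
    · apply Subtype.ext; rw [← hgen _ _ hpe]; exact h
    · apply Subtype.ext; exact h'

open Classical in
theorem aux_count {E A : Type*} [Fintype E] (p : E → A) (s : E → E) (hs : ∀ e, s (s e) = e)
    (hp : ∀ e, p (s e) = p e) (hfix : ∀ e e', s e = e → s e' = e' → p e = p e' → e = e')
    (f : E → Bool) (hf : ∀ e, s e ≠ e → f (s e) ≠ f e) (k : ℕ) (a : A)
    (hk : (Finset.univ.filter (fun e => p e = a)).card ≤ 2 * k) (b : Bool) :
    (Finset.univ.filter (fun e => p e = a ∧ f e = b)).card ≤ k := by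
  have hsinj : Function.Injective s := fun x y h => by rw [← hs x, h, hs]
  set B := Finset.univ.filter (fun e => p e = a ∧ f e = b)
  set C := Finset.univ.filter (fun e => p e = a ∧ f e = !b)
  have hsum : B.card + C.card ≤ 2 * k := by
    rw [← Finset.card_union_of_disjoint]
    · refine le_trans (Finset.card_le_card ?_) hk
      intro e; simp only [B, C, Finset.mem_union, Finset.mem_filter]; tauto
    · rw [Finset.disjoint_left]
      intro e h1 h2
      simp [B, C] at h1 h2
      simp_all
  have h1 : (B.filter (fun e => s e = e)).card ≤ 1 := by
    rw [Finset.card_le_one]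
    intro x hx y hy
    simp [B] at hx hy
    exact hfix x y hx.2 hy.2 (hx.1.1.trans hy.1.1.symm)
  have h2 : (B.filter (fun e => ¬ s e = e)).card ≤ C.card := by
    apply Finset.card_le_card_of_injOn s
    · intro x hx
      simp [B] at hx
      have := hf x hx.2
      simp only [C, Finset.coe_filter, Set.mem_ofPred_eq, Finset.mem_univ, true_and, hp]
      refine ⟨hx.1.1, ?_⟩
      rw [hx.1.2] at this
      exact Bool.eq_not_of_ne this
    · exact hsinj.injOn
  have h3 := Finset.card_filter_add_card_filter_not (s := B) (fun e => s e = e)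
  omega

open Classical in
theorem aux_split {E A B : Type*} [Fintype E] (p : E → A) (q : E → B) : ∃ f : E → Bool,
    (∀ k a, (Finset.univ.filter (fun e => p e = a)).card ≤ 2 * k → ∀ b,
      (Finset.univ.filter (fun e => p e = a ∧ f e = b)).card ≤ k) ∧
    (∀ k a, (Finset.univ.filter (fun e => q e = a)).card ≤ 2 * k → ∀ b,
      (Finset.univ.filter (fun e => q e = a ∧ f e = b)).card ≤ k) := by
  obtain ⟨s, s1, s2, s3⟩ := aux_pair p
  obtain ⟨t, t1, t2, t3⟩ := aux_pair q
  obtain ⟨f, f1, f2⟩ := aux_inv s t s1 t1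
  exact ⟨f, fun k a h b => aux_count p s s1 s2 s3 f f1 k a h b,
    fun k a h b => aux_count q t t1 t2 t3 f f2 k a h b⟩

open Classical in
theorem aux_main {E X Y : Type*} [Fintype E] [Fintype X] (p : E → X) (q : E → Y)
    (hp : ∀ x, (Finset.univ.filter (fun e => p e = x)).card = 4)
    (hq : ∀ y, (Finset.univ.filter (fun e => q e = y)).card ≤ 8) :
    ∃ (f1 f4 : E → Bool) (f3 : X → Bool → Bool),
      (∀ e e', p e = p e' → f1 e = f1 e' → f4 e = f4 e' → e = e') ∧
      (∀ e e', q e = q e' → f1 e = f1 e' → f3 (p e) (f1 e) = f3 (p e') (f1 e') →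
        f4 e = f4 e' → e = e') := by
  have two : ∀ (P : E → Prop) (f : E → Bool) , (Finset.univ.filter P).card =
      (Finset.univ.filter (fun e => P e ∧ f e = true)).card +
      (Finset.univ.filter (fun e => P e ∧ f e = false)).card := by
    intro P f
    rw [← Finset.card_filter_add_card_filter_not (s := Finset.univ.filter P) (fun e => f e = true),
      Finset.filter_filter, Finset.filter_filter]
    simp
  obtain ⟨f1, a1, b1⟩ := aux_split p q
  have a1' : ∀ x j, (Finset.univ.filter (fun e => p e = x ∧ f1 e = j)).card = 2 := by
    intro x j
    have h := a1 2 x (by rw [hp])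
    have h2 := two (fun e => p e = x) f1
    rw [hp] at h2
    have := h true
    have := h false
    cases j <;> omega
  have b1' : ∀ y j, (Finset.univ.filter (fun e => q e = y ∧ f1 e = j)).card ≤ 4 :=
    fun y j => b1 4 y (hq y) j
  obtain ⟨f2, a2, b2⟩ := aux_split (fun e => (p e, f1 e)) (fun e => (q e, f1 e))
  simp only [Prod.forall, Prod.mk.injEq] at a2 b2
  have a2' : ∀ x j i, (Finset.univ.filter (fun e => (p e = x ∧ f1 e = j) ∧ f2 e = i)).card = 1 := by
    intro x j i
    have h := a2 1 x j (by rw [a1'])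
    have h2 : 2 = (Finset.univ.filter (fun e => (p e = x ∧ f1 e = j) ∧ f2 e = true)).card +
        (Finset.univ.filter (fun e => (p e = x ∧ f1 e = j) ∧ f2 e = false)).card := by
      rw [← a1' x j]
      convert two (fun e => p e = x ∧ f1 e = j) f2
    have := h true
    have := h false
    cases i <;> omega
  have b2' : ∀ y j i, (Finset.univ.filter (fun e => (q e = y ∧ f1 e = j) ∧ f2 e = i)).card ≤ 2 :=
    fun y j i => b2 2 y j (b1' y j) i
  have hT : ∀ x j i, ∃ e, ((p e = x ∧ f1 e = j) ∧ f2 e = i) ∧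
      ∀ e', ((p e' = x ∧ f1 e' = j) ∧ f2 e' = i) → e' = e := by
    intro x j i
    obtain ⟨e, he⟩ := Finset.card_eq_one.1 (a2' x j i)
    simp only [Finset.ext_iff, Finset.mem_filter, Finset.mem_univ, true_and,
      Finset.mem_singleton] at he
    exact ⟨e, (he e).2 rfl, fun e' h => (he e').1 h⟩
  choose T T1 T2 using hT
  obtain ⟨f3, a3, b3⟩ := aux_split (fun z : X × Bool => (q (T z.1 z.2 false), z.2))
    (fun z : X × Bool => (q (T z.1 z.2 true), z.2))
  have hfib : ∀ i y j, (Finset.univ.filter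
      (fun z : X × Bool => (q (T z.1 z.2 i), z.2) = (y, j))).card ≤ 2 * 1 := by
    intro i y j
    refine le_trans (Finset.card_le_card_of_injOn (fun z => T z.1 z.2 i) ?_ ?_) (b2' y j i)
    · rintro ⟨x, j'⟩ hz
      simp only [Finset.coe_filter, Finset.mem_univ, true_and, Set.mem_ofPred_eq,
        Prod.mk.injEq] at hz ⊢
      exact ⟨⟨hz.1, (T1 x j' i).1.2.trans hz.2⟩, (T1 x j' i).2⟩
    · rintro ⟨x, j1⟩ h1 ⟨x', j2⟩ h2 h
      dsimp only at h
      have u := T1 x j1 i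
      have v := T1 x' j2 i
      rw [h] at u
      rw [← u.1.1, ← u.1.2, v.1.1, v.1.2]
  have hone : ∀ i y j b, (Finset.univ.filter
      (fun z : X × Bool => (q (T z.1 z.2 i), z.2) = (y, j) ∧ f3 z = b)).card ≤ 1 := by
    intro i y j b
    cases i
    · convert a3 1 (y, j) (by convert hfib false y j) b
    · convert b3 1 (y, j) (by convert hfib true y j) b
  have c3 : ∀ y j b, (Finset.univ.filter
      (fun e => (q e = y ∧ f1 e = j) ∧ f3 (p e, f1 e) = b)).card ≤ 2 * 1 := by
    intro y j b
    have hx : ∀ i, (Finset.univ.filter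
      (fun e => ((q e = y ∧ f1 e = j) ∧ f3 (p e, f1 e) = b) ∧ f2 e = i)).card ≤ 1 := by
      intro i
      refine le_trans (Finset.card_le_card_of_injOn (fun e => (p e, f1 e)) ?_ ?_) (hone i y j b)
      · intro e he
        simp only [Finset.coe_filter, Finset.mem_univ, true_and, Set.mem_ofPred_eq,
          Prod.mk.injEq] at he ⊢
        rw [← T2 (p e) (f1 e) i e ⟨⟨rfl, rfl⟩, he.2⟩]
        exact he.1
      · intro e he e' he' h
        simp only [Finset.coe_filter, Finset.mem_univ, true_and, Set.mem_ofPred_eq,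
          Prod.mk.injEq] at he he' h
        rw [T2 (p e) (f1 e) i e ⟨⟨rfl, rfl⟩, he.2⟩,
          T2 (p e) (f1 e) i e' ⟨⟨h.1.symm, h.2.symm⟩, he'.2⟩]
    have h1 := hx true
    have h2 := hx false
    have h3 := Nat.add_le_add h1 h2
    have h4 := two (fun e => (q e = y ∧ f1 e = j) ∧ f3 (p e, f1 e) = b) f2
    refine le_trans (le_of_eq ?_) h3
    convert h4
  obtain ⟨f4, a4, b4⟩ := aux_split (fun e => (p e, f1 e)) (fun e => ((q e, f1 e), f3 (p e, f1 e)))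
  simp only [Prod.forall, Prod.mk.injEq] at a4 b4
  refine ⟨f1, f4, fun x j => f3 (x, j), ?_, ?_⟩
  · intro e e' h1 h2 h3
    have := a4 1 (p e) (f1 e) (by rw [a1']) (f4 e)
    rw [Finset.card_le_one] at this
    apply this <;> simp [h1, h2, h3]
  · intro e e' h1 h2 h3 h4
    have := b4 1 (q e) (f1 e) (f3 (p e, f1 e)) (c3 _ _ _) (f4 e)
    rw [Finset.card_le_one] at this
    apply this
    · simp
    · simp only [Finset.mem_filter, Finset.mem_univ, true_and]
      exact ⟨⟨⟨h1.symm, h2.symm⟩, h3.symm⟩, h4.symm⟩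

/-- The color encoded by three bits. -/
def aux_col (a b c : Bool) : ℕ := 4 * a.toNat + 2 * b.toNat + c.toNat + 1

theorem aux_col_inj {a b c a' b' c' : Bool} (h : aux_col a b c = aux_col a' b' c') :
    a = a' ∧ b = b' ∧ c = c' := by
  revert a b c a' b' c'; decide

theorem aux_col_mem (a b c : Bool) : aux_col a b c ∈ Set.Icc 1 8 := by
  revert a b c; simp [aux_col]

/-- every finite `(4,7)`-biregular graph has a cyclic interval `t`-coloring
for some `t ≤ 8`. -/
theorem stmt_12 {V : Type*} [Fintype V] (G : SimpleGraph V) [DecidableRel G.Adj]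
    (hbireg : IsBiregular G 4 7) :
    ∃ t : ℕ, t ≤ 8 ∧ ∃ c : Sym2 V → ℕ, IsCyclicIntervalColoring G t c := by
  classical
  obtain ⟨X, -, -, hb, hX, hY⟩ := hbireg
  let E := {d : V × V // d.1 ∈ X ∧ G.Adj d.1 d.2}
  let p : E → X := fun d => ⟨d.1.1, d.2.1⟩
  let q : E → V := fun d => d.1.2
  have hqX : ∀ d : E, q d ∉ X := fun d => (hb _ _ d.2.2).1 d.2.1
  let ed : E → Sym2 V := fun d => s(d.1.1, d.1.2)
  have edinj : Function.Injective ed := by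
    rintro ⟨⟨a, b⟩, h1, h2⟩ ⟨⟨a', b'⟩, h1', h2'⟩ h
    have n1 := (hb _ _ h2).1 h1
    have n2 := (hb _ _ h2').1 h1'
    simp only [ed, Sym2.eq_iff] at h
    rcases h with ⟨rfl, rfl⟩ | ⟨rfl, rfl⟩
    · rfl
    · exact absurd h1' n1
  have edsurj : ∀ e ∈ G.edgeSet, ∃ d, ed d = e := by
    intro e
    induction e with | _ a b
    intro h
    rw [SimpleGraph.mem_edgeSet] at h
    by_cases ha : a ∈ X
    · exact ⟨⟨(a, b), ha, h⟩, rfl⟩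
    · have hbX : b ∈ X := by by_contra hbX; exact ha ((hb _ _ h).2 hbX)
      exact ⟨⟨(b, a), hbX, h.symm⟩, Sym2.eq_swap⟩
  have edmem : ∀ d, ed d ∈ G.edgeSet := fun d => d.2.2
  have memed : ∀ d v, v ∈ ed d ↔ v = (p d).1 ∨ v = q d := by
    intro d v; simp [ed, p, q]
  have hp : ∀ x, (Finset.univ.filter (fun e => p e = x)).card = 4 := by
    rintro ⟨x, hx⟩
    rw [← hX x hx, ← SimpleGraph.card_neighborFinset_eq_degree]
    apply Finset.card_bij (fun e _ => q e)
    · rintro ⟨⟨a, b⟩, h1, h2⟩ h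
      simp [p, q] at h ⊢
      exact h ▸ h2
    · rintro ⟨⟨a, b⟩, h1, h2⟩ h ⟨⟨a', b'⟩, h1', h2'⟩ h' hh
      simp [p, q] at h h' hh
      subst h h' hh; rfl
    · intro y hy
      exact ⟨⟨(x, y), hx, by simpa using hy⟩, by simp [p], rfl⟩
  have hq' : ∀ y, y ∉ X → (Finset.univ.filter (fun e => q e = y)).card = 7 := by
    intro y hy
    rw [← hY y hy, ← SimpleGraph.card_neighborFinset_eq_degree]
    apply Finset.card_bij (fun e _ => (p e).1)
    · rintro ⟨⟨a, b⟩, h1, h2⟩ h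
      simp [p, q] at h ⊢
      exact h ▸ h2.symm
    · rintro ⟨⟨a, b⟩, h1, h2⟩ h ⟨⟨a', b'⟩, h1', h2'⟩ h' hh
      simp [p, q] at h h' hh
      subst h h' hh; rfl
    · intro x hx
      have hx' : G.Adj y x := by simpa using hx
      have hxX : x ∈ X := (hb _ _ hx'.symm).2 hy
      exact ⟨⟨(x, y), hxX, hx'.symm⟩, by simp [q], rfl⟩
  have hq : ∀ y, (Finset.univ.filter (fun e => q e = y)).card ≤ 8 := by
    intro y
    by_cases hy : y ∈ X
    · rw [Finset.card_eq_zero.2]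
      · omega
      · ext d
        simp only [Finset.mem_filter, Finset.mem_univ, true_and, Finset.notMem_empty, iff_false]
        rintro rfl
        exact hqX d hy
    · rw [hq' y hy]; omega
  obtain ⟨f1, f4, f3, k1, k2⟩ := aux_main p q
    (fun x => by convert hp x) (fun y => by convert hq y)
  let col : E → ℕ := fun d => aux_col (f3 (p d) (f1 d)) (f1 d) (f4 d)
  have colmem : ∀ d, col d ∈ Set.Icc 1 8 := fun d => aux_col_mem _ _ _
  have colp : ∀ d d', p d = p d' → col d = col d' → d = d' := by
    intro d d' h1 h2
    obtain ⟨-, u, v⟩ := aux_col_inj h2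
    exact k1 d d' h1 u v
  have colq : ∀ d d', q d = q d' → col d = col d' → d = d' := by
    intro d d' h1 h2
    obtain ⟨w, u, v⟩ := aux_col_inj h2
    exact k2 d d' h1 u w v
  let c : Sym2 V → ℕ := fun e => if h : ∃ d, ed d = e then col h.choose else 0
  have hc : ∀ d, c (ed d) = col d := by
    intro d
    have h : ∃ d', ed d' = ed d := ⟨d, rfl⟩
    simp only [c, dif_pos h]
    rw [edinj h.choose_spec]
  have hcolors : ∀ v, colorsAt G c v = {n | ∃ d, v ∈ ed d ∧ col d = n} := by
    intro v
    ext n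
    constructor
    · rintro ⟨e, ⟨he, hv⟩, rfl⟩
      obtain ⟨d, rfl⟩ := edsurj e he
      exact ⟨d, hv, (hc d).symm⟩
    · rintro ⟨d, hv, rfl⟩
      exact ⟨ed d, ⟨edmem d, hv⟩, hc d⟩
  refine ⟨8, le_rfl, c, ⟨?_, ?_⟩, ?_⟩
  · intro e he
    obtain ⟨d, rfl⟩ := edsurj e he
    rw [hc]; exact colmem d
  · intro e he e' he' hne hv
    obtain ⟨v, hv, hv'⟩ := hv
    obtain ⟨d, rfl⟩ := edsurj e he
    obtain ⟨d', rfl⟩ := edsurj e' he'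
    rw [hc, hc]
    intro h
    apply hne
    congr 1
    rw [memed] at hv hv'
    rcases hv with rfl | rfl <;> rcases hv' with hv' | hv'
    · exact colp _ _ (Subtype.ext hv') h
    · exact absurd (hv' ▸ (p d).2) (hqX d')
    · exact absurd (hv' ▸ (p d').2) (hqX d)
    · exact colq _ _ hv' h
  · intro v
    rw [hcolors]
    by_cases hv : v ∈ X
    · -- the colors at `v` are given by the two bits `f3 v false`, `f3 v true`
      have hset : {n | ∃ d, v ∈ ed d ∧ col d = n} =
          {n | ∃ j i, aux_col (f3 ⟨v, hv⟩ j) j i = n} := by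
        have hmem : ∀ d, v ∈ ed d ↔ p d = ⟨v, hv⟩ := by
          intro d
          rw [memed]
          constructor
          · rintro (h | h)
            · exact Subtype.ext h.symm
            · exact absurd (h ▸ hv) (hqX d)
          · intro h; left; rw [h]
        have hsurj : Finset.image (fun d => (f1 d, f4 d))
            (Finset.univ.filter (fun d => p d = ⟨v, hv⟩)) = Finset.univ := by
          apply Finset.eq_univ_of_card
          rw [Finset.card_image_of_injOn, hp]
          · rfl
          · intro d hd d' hd' h
            simp only [Finset.coe_filter, Finset.mem_univ, true_and, Set.mem_ofPred_eq,
              Prod.mk.injEq] at hd hd' h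
            exact k1 d d' (hd.trans hd'.symm) h.1 h.2
        ext n
        constructor
        · rintro ⟨d, hd, rfl⟩
          rw [hmem] at hd
          exact ⟨f1 d, f4 d, by simp only [col, hd]⟩
        · rintro ⟨j, i, rfl⟩
          have : (j, i) ∈ Finset.image (fun d => (f1 d, f4 d))
            (Finset.univ.filter (fun d => p d = ⟨v, hv⟩)) := by rw [hsurj]; simp
          simp only [Finset.mem_image, Finset.mem_filter, Finset.mem_univ, true_and,
            Prod.mk.injEq] at this
          obtain ⟨d, hd, rfl, rfl⟩ := this
          exact ⟨d, (hmem d).2 hd, by simp only [col, hd]⟩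
      rw [hset]
      simp only [Bool.exists_bool, aux_col]
      generalize f3 ⟨v, hv⟩ true = a
      generalize f3 ⟨v, hv⟩ false = b
      cases a <;> cases b
      · left; refine ⟨1, 4, ?_⟩; ext n; simp; omega
      · left; refine ⟨3, 6, ?_⟩; ext n; simp; omega
      · right; refine ⟨3, 6, ?_⟩; ext n; simp; omega
      · left; refine ⟨5, 8, ?_⟩; ext n; simp; omega
    · right
      have hmem : ∀ d, v ∈ ed d ↔ q d = v := by
        intro d
        rw [memed]
        constructor
        · rintro (h | h)
          · exact absurd (h ▸ (p d).2) hv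
          · exact h.symm
        · intro h; right; rw [h]
      let F := Finset.image col (Finset.univ.filter (fun d => q d = v))
      have hF : F.card = 7 := by
        rw [Finset.card_image_of_injOn, hq' v hv]
        intro d hd d' hd' h
        simp only [Finset.coe_filter, Finset.mem_univ, true_and, Set.mem_ofPred_eq] at hd hd'
        exact colq d d' (hd.trans hd'.symm) h
      have hsub : F ⊆ Finset.Icc 1 8 := by
        intro n hn
        simp only [F, Finset.mem_image] at hn
        obtain ⟨d, -, rfl⟩ := hn
        simpa using colmem d
      have hcard : (Finset.Icc 1 8 \ F).card = 1 := by
        rw [Finset.card_sdiff_of_subset hsub, hF]; rfl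
      obtain ⟨m, hm⟩ := Finset.card_eq_one.1 hcard
      refine ⟨m, m, ?_⟩
      have hFs : {n | ∃ d, v ∈ ed d ∧ col d = n} = (F : Set ℕ) := by
        ext n; simp [F, hmem]
      rw [hFs, ← Finset.coe_Icc, ← Finset.coe_sdiff, hm]
      simp
end

section
/- For any positive integers n₁, n₂, …, n_r (r ≥ 2), the complete multipartite graph K_{n₁,n₂,…,n_r} has a cyclic interval n-coloring, where n = n₁ + n₂ + ⋯ + n_r is the total number of vertices. -/
open SimpleGraph

/-- for positive integers `n₁, …, n_r` (`r ≥ 2`), the complete multipartite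
graph `K_{n₁,…,n_r}` has a cyclic interval `n`-coloring, where `n = n₁ + ⋯ + n_r`. -/
theorem stmt_13 (r : ℕ) (hr : 2 ≤ r) (n : Fin r → ℕ) (hn : ∀ i, 0 < n i) :
    ∃ c : Sym2 (Σ i : Fin r, Fin (n i)) → ℕ,
      IsCyclicIntervalColoring
        (SimpleGraph.completeMultipartiteGraph (fun i : Fin r => Fin (n i))) (∑ i, n i) c := by
  obtain ⟨p, s, hp⟩ : ∃ (p : (Σ i : Fin r, Fin (n i)) ≃ Fin (∑ i, n i)) (s : Fin r → ℕ),
      ∀ k, (p k : ℕ) = s k.1 + k.2 :=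
    ⟨finSigmaFinEquiv, fun i => ∑ j : Fin i.1, n (Fin.castLE i.2.le j),
      fun k => finSigmaFinEquiv_apply k⟩
  generalize (∑ i, n i) = N at p hp ⊢
  have hpN : ∀ k, (p k : ℕ) < N := fun k => (p k).2
  have hinj : ∀ k l, (p k : ℕ) = p l → k = l := fun k l h => p.injective (Fin.ext h)
  have hpart : ∀ (i : Fin r) w, w.1 = i ↔ s i ≤ p w ∧ (p w : ℕ) < s i + n i := by
    intro i w
    constructor
    · rintro rfl
      have := hp w
      have := w.2.2
      omega
    · rintro ⟨h1, h2⟩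
      have h3 := hp ⟨i, ⟨p w - s i, by omega⟩⟩
      have h4 := hinj ⟨i, ⟨p w - s i, by omega⟩⟩ w (by rw [h3]; simp only; omega)
      rw [← h4]
  have hsN : ∀ i, s i + n i ≤ N := by
    intro i
    have h0 := hn i
    have h1 := hp ⟨i, ⟨n i - 1, by omega⟩⟩
    have h2 := hpN ⟨i, ⟨n i - 1, by omega⟩⟩
    simp only at h1
    omega
  let c : Sym2 (Σ i : Fin r, Fin (n i)) → ℕ :=
    Sym2.lift ⟨fun a b => ((p a : ℕ) + p b) % N + 1, fun a b => by simp only [Nat.add_comm]⟩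
  have hc : ∀ a b, c s(a, b) = ((p a : ℕ) + p b) % N + 1 := fun a b => rfl
  have hmod : ∀ a b : ℕ, a < N → b < N →
      (a + b < N ∧ (a + b) % N = a + b) ∨ (N ≤ a + b ∧ (a + b) % N = a + b - N) := by
    intro a b ha hb
    rcases Nat.lt_or_ge (a + b) N with h | h
    · exact Or.inl ⟨h, Nat.mod_eq_of_lt h⟩
    · refine Or.inr ⟨h, ?_⟩
      rw [Nat.mod_eq_sub_mod h, Nat.mod_eq_of_lt (by omega)]
  refine ⟨c, ⟨?_, ?_⟩, ?_⟩
  · intro e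
    induction e with | _ a b
    intro _
    have h := Nat.mod_lt ((p a : ℕ) + p b) (lt_of_le_of_lt (Nat.zero_le _) (hpN a))
    rw [hc, Set.mem_Icc]
    omega
  · rintro e₁ - e₂ - hne ⟨v, hv1, hv2⟩ heq
    obtain ⟨a, rfl⟩ := hv1
    obtain ⟨b, rfl⟩ := hv2
    rw [hc, hc] at heq
    apply hne
    have hab : a = b := by
      apply hinj
      have h1 := hmod _ _ (hpN v) (hpN a)
      have h2 := hmod _ _ (hpN v) (hpN b)
      have := hpN a
      have := hpN b
      omega
    rw [hab]
  · intro v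
    have hq := hpN v
    have hm := hn v.1
    have hs := hsN v.1
    have key : ∀ k, k ∈ colorsAt (SimpleGraph.completeMultipartiteGraph
        (fun i : Fin r => Fin (n i))) c v ↔ ∃ x, x < N ∧
          ¬ (s v.1 ≤ x ∧ x < s v.1 + n v.1) ∧ k = ((p v : ℕ) + x) % N + 1 := by
      intro k
      constructor
      · rintro ⟨e, ⟨he, w, rfl⟩, rfl⟩
        refine ⟨p w, hpN w, ?_, hc _ _⟩
        rw [← hpart]
        exact fun h => he h.symm
      · rintro ⟨x, hx, hx2, rfl⟩
        refine ⟨s(v, p.symm ⟨x, hx⟩), ⟨?_, Sym2.mem_mk_left _ _⟩, ?_⟩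
        · intro h
          have := (hpart v.1 (p.symm ⟨x, hx⟩)).1 h.symm
          rw [Equiv.apply_symm_apply] at this
          exact hx2 this
        · rw [hc, Equiv.apply_symm_apply]
    generalize (p v : ℕ) = q at *
    generalize s v.1 = t at *
    generalize n v.1 = m at *
    have key2 : ∀ k, k ∈ colorsAt (SimpleGraph.completeMultipartiteGraph
        (fun i : Fin r => Fin (n i))) c v ↔ 1 ≤ k ∧ k ≤ N ∧
          ((q < k ∧ ¬ (t + q + 1 ≤ k ∧ k < t + q + 1 + m)) ∨
           (k ≤ q ∧ ¬ (t + q + 1 ≤ k + N ∧ k + N < t + q + 1 + m))) := by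
      intro k
      rw [key]
      constructor
      · rintro ⟨x, hx, hx2, rfl⟩
        have := hmod q x hq hx
        omega
      · rintro ⟨h1, h2, h3⟩
        by_cases h : q < k
        · have := hmod q (k - 1 - q) hq (by omega)
          exact ⟨k - 1 - q, by omega, by omega, by omega⟩
        · have := hmod q (k + N - 1 - q) hq (by omega)
          exact ⟨k + N - 1 - q, by omega, by omega, by omega⟩
    by_cases h1 : q + t + m ≤ N
    · right
      refine ⟨q + t + 1, q + t + m, ?_⟩
      ext k
      rw [Set.mem_sdiff, key2, Set.mem_Icc, Set.mem_Icc]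
      omega
    by_cases h2 : N ≤ q + t
    · right
      refine ⟨q + t - N + 1, q + t + m - N, ?_⟩
      ext k
      rw [Set.mem_sdiff, key2, Set.mem_Icc, Set.mem_Icc]
      omega
    · left
      refine ⟨q + t + m - N + 1, q + t, ?_⟩
      ext k
      rw [key2, Set.mem_Icc]
      omega
end
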